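/- Work in the max-plus semiring $\mathbb R_{\max}=\mathbb R\cup\{-\infty\}$: for matrices and vectors with entries in $\mathbb R_{\max}$, $(A\otimes B)_{ij}=\max_k(A_{ik}+B_{kj})$ and $(A\otimes v)_i=\max_j(A_{ij}+v_j)$. Write $0$ for the zero vector and $\mathbf 1$ for the all-ones vector. Let $(A(n))_{n\in\mathbb Z}$ be a stationary and ergodic sequence of random $d\times d$ matrices with entries in $\mathbb R_{\max}$ such that the positive part of $\max_{ij}A_{ij}(0)$ is integrable, and set $x(n,0):=A(n-1)\otimes\cdots\otimes A(0)\otimes 0$. For such a sequence $M$ of square matrices, let $\gamma(M)\in\mathbb R\cup\{-\infty\}$ be its maximal Lyapunov exponent, i.e. the almost-sure limit of $\frac1n\max_{ij}(M(n-1)\otimes\cdots\otimes M(0))_{ij}$. The graph $\mathcal G(M)$ of a stationary sequence $M$ of square random matrices has as nodes the indices of $M$ and an arc $(i,j)$ whenever $\mathbb P(M_{ij}(0)\ne-\infty)>0$; it is called strongly connected if any node can be reached from any node by a path of length at least one. The strongly connected components (s.c.c.) of $\mathcal G(A)$ are the classes of mutual reachability, a node lying on no circuit being alone in its s.c.c.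 Write $c\to\tilde c$ for two s.c.c. (resp. $c\to i$, $i\to \tilde c$ for a node $i$) if they are equal (resp. $i\in c$, $i\in\tilde c$) or there is a path in $\mathcal G(A)$ from a node of the first to a node of the second. For a s.c.c. $c$ put $A^{(c)}(n):=(A_{ij}(n))_{i,j\in c}$, $\gamma^{(c)}:=\gamma(A^{(c)})$, $y^{(c)}(n,0):=A^{(c)}(-1)\otimes\cdots\otimes A^{(c)}(-n)\otimes 0$, $\gamma^{[c]}:=\max\{\gamma^{(\tilde c)}:c\to\tilde c\}$, and $$H_c:=\{i:\exists\,\tilde c \text{ s.c.c.},\ c\to i\to\tilde c,\ \gamma^{(\tilde c)}=\gamma^{[c]}\},\qquad A^{\{c\}}(n):=(A_{ij}(n))_{i,j\in H_c}.$$ Call $c$ dominating if $c$ is the only s.c.c. $\tilde c$ such that $c\to\tilde c\to\hat c$ for some s.c.c. $\hat c$ with $\gamma^{(\hat c)}=\gamma^{[c]}$. Assume: 1. For every s.c.c. $c$ of $\mathcal G(A)$, $A^{\{c\}}(0)\otimes 0$ is integrable (in particular $A^{\{c\}}(0)$ almost surely has at least one finite entry on each row). 2. For every dominating s.c.c. $c$,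 $\lim_n\frac1n y^{(c)}(n,0)=\gamma^{(c)}\mathbf 1$ almost surely. 3. For all disjoint subsets $I,J$ of $\{1,\dots,d\}$ such that $(A_{ij}(n))_{i,j\in I\cup J}$ almost surely has at least one finite entry on each row, $A_{ij}(n)=-\infty$ almost surely for all $i\in J$, $j\in I$, the graph $\mathcal G(B)$ of $B(n):=(A_{ij}(n))_{i,j\in I}$ is strongly connected, and $D(n):=(A_{ij}(n))_{i\in I,j\in J}$ is not almost surely identically $-\infty$, one has $$\mathbb P\bigl(\exists i\in I,\ \forall n\ge 0,\ (B(-1)\otimes\cdots\otimes B(-n)\otimes D(-n-1)\otimes 0)_i=-\infty\bigr)=0,$$ where for $n=0$ the vector is $D(-1)\otimes 0$. Then $\frac1n x(n,0)$ converges almost surely in $\mathbb R^d$, and for every $i\in\{1,\dots,d\}$, $$\lim_n\frac1n x_i(n,0)=\max\{\gamma^{(c)}: c \text{ s.c.c. with } i\to c\}\quad\text{almost surely.}$$ -/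

import Mathlib

open Filter MeasureTheory Topology

noncomputable section

/-! Elements of `ℝ_max = ℝ ∪ {-∞}` are extended reals different from `⊤`; `-∞` is `⊥`, and
`⊥ + x = ⊥` for every `x`. -/

/-- Max-plus action of a matrix on a vector: `(M ⊗ v) i = max_j (M i j + v j)`. -/
def mpVec {ι κ : Type*} (M : ι → κ → EReal) (v : κ → EReal) : ι → EReal :=
  fun i => ⨆ j, M i j + v j

/-- `xVec M n = x(n,0) = M(n-1) ⊗ ⋯ ⊗ M(0) ⊗ 0`. -/
def xVec {ι : Type*} (M : ℤ → ι → ι → EReal) : ℕ → ι → EReal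
  | 0 => fun _ => 0
  | n + 1 => mpVec (M n) (xVec M n)

/-- `pastAct M n v = M(-1) ⊗ ⋯ ⊗ M(-n) ⊗ v`. -/
def pastAct {ι : Type*} (M : ℤ → ι → ι → EReal) : ℕ → (ι → EReal) → ι → EReal
  | 0, v => v
  | n + 1, v => pastAct M n (mpVec (M (-(n : ℤ) - 1)) v)

/-- `yVec M n = y(n,0) = M(-1) ⊗ ⋯ ⊗ M(-n) ⊗ 0`. -/
def yVec {ι : Type*} (M : ℤ → ι → ι → EReal) (n : ℕ) : ι → EReal :=
  pastAct M n (fun _ => 0)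

/-- `(1/n) · x` for an extended real `x`. -/
def mpScale (n : ℕ) (x : EReal) : EReal := (((n : ℝ)⁻¹ : ℝ) : EReal) * x

/-- The submatrix with rows in `I` and columns in `J`. -/
def subMat {ι : Type*} (I J : Set ι) (M : ι → ι → EReal) : I → J → EReal :=
  fun i j => M i j

/-- The two-sided sequence of random matrices `A` is stationary and ergodic: its law on the space
of two-sided sequences is invariant and ergodic under the shift. -/
def StationaryErgodic {Ω ι : Type*} [MeasurableSpace Ω] (μ : Measure Ω)
    (A : ℤ → Ω → ι → ι → EReal) : Prop :=
  Ergodic (fun (a : ℤ → ι → ι → EReal) (n : ℤ) => a (n + 1))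
    (μ.map (fun (ω : Ω) (n : ℤ) => A n ω))

/-- `g` is the almost-sure limit of `(1/n) · max_i x_i(n,0)`; here
`max_i x_i(n,0) = max_{ij} (A(n-1) ⊗ ⋯ ⊗ A(0))_{ij}`. -/
def IsLyapunov {Ω ι : Type*} [MeasurableSpace Ω] (μ : Measure Ω)
    (A : ℤ → Ω → ι → ι → EReal) (g : EReal) : Prop :=
  ∀ᵐ ω ∂μ, Tendsto (fun n => mpScale n (⨆ i, xVec (fun m => A m ω) n i)) atTop (𝓝 g)

/-- The maximal Lyapunov exponent `γ(A)`: the constant that is the almost-sure limit of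
`(1/n) · max_i x_i(n,0)`. -/
def lyapunov {Ω ι : Type*} [MeasurableSpace Ω] (μ : Measure Ω)
    (A : ℤ → Ω → ι → ι → EReal) : EReal :=
  Classical.epsilon (IsLyapunov μ A)

/-- The defining limit is unique, so `lyapunov` is that limit as soon as it exists. -/
theorem IsLyapunov.lyapunov_eq {Ω ι : Type*} [MeasurableSpace Ω] {μ : Measure Ω}
    [IsProbabilityMeasure μ] {A : ℤ → Ω → ι → ι → EReal} {g : EReal}
    (h : IsLyapunov μ A g) : lyapunov μ A = g := by
  have h' : IsLyapunov μ A (lyapunov μ A) := Classical.epsilon_spec (p := IsLyapunov μ A) ⟨g, h⟩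
  obtain ⟨ω, h1, h2⟩ := (h'.and h).exists
  exact tendsto_nhds_unique h1 h2

/-- Arcs of the graph `𝒢(M)` of a random matrix `M`: `(i,j)` is an arc iff
`M i j ≠ -∞` with positive probability. -/
def arcRel {Ω ι : Type*} [MeasurableSpace Ω] (μ : Measure Ω) (M : Ω → ι → ι → EReal)
    (i j : ι) : Prop :=
  0 < μ {ω | M ω i j ≠ ⊥}

/-- Every node is joined to every node by a path of length at least one. -/
def StronglyConnected {ι : Type*} (r : ι → ι → Prop) : Prop :=
  ∀ i j, Relation.TransGen r i j

/-- `c` is a strongly connected component of the graph with arc relation `r`: a class of mutual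
reachability. A node on no circuit is alone in its class. -/
def IsSCC {ι : Type*} (r : ι → ι → Prop) (c : Set ι) : Prop :=
  ∃ i, c = {j | Relation.ReflTransGen r i j ∧ Relation.ReflTransGen r j i}

/-- `i → c`: the node `i` is in `c` or there is a path from `i` to a node of `c`. -/
def nodeReach {ι : Type*} (r : ι → ι → Prop) (i : ι) (c : Set ι) : Prop :=
  ∃ j ∈ c, Relation.ReflTransGen r i j

/-- `c → c'`: for two s.c.c., they are equal or there is a path from a node of `c` to a node
of `c'`. -/
def sccReach {ι : Type*} (r : ι → ι → Prop) (c c' : Set ι) : Prop :=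
  ∃ i ∈ c, nodeReach r i c'

section Components

variable {Ω ι : Type*} [MeasurableSpace Ω] (μ : Measure Ω) (A : ℤ → Ω → ι → ι → EReal)

/-- `γ^{(c)} = γ(A^{(c)})`, where `A^{(c)}(n) = (A_{ij}(n))_{i,j ∈ c}`. -/
def gammaSCC (c : Set ι) : EReal :=
  lyapunov μ (fun n ω => subMat c c (A n ω))

/-- `E_c`: the s.c.c. that are reachable from `c`. -/
def Eset (c : Set ι) : Set (Set ι) :=
  {c' | IsSCC (arcRel μ (A 0)) c' ∧ sccReach (arcRel μ (A 0)) c c'}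

/-- `γ^{[c]} = max {γ^{(c')} : c' ∈ E_c}`. -/
def gammaDown (c : Set ι) : EReal :=
  ⨆ c' ∈ Eset μ A c, gammaSCC μ A c'

/-- `H_c`: the nodes `i` with `c → i → c'` for some s.c.c. `c'` with `γ^{(c')} = γ^{[c]}`. -/
def Hset (c : Set ι) : Set ι :=
  {i | ∃ c', IsSCC (arcRel μ (A 0)) c' ∧
    (∃ j ∈ c, Relation.ReflTransGen (arcRel μ (A 0)) j i) ∧
    nodeReach (arcRel μ (A 0)) i c' ∧ gammaSCC μ A c' = gammaDown μ A c}

/-- `G_c`: the `c₁ ∈ E_c` with `c → c₁ → c₂` for some s.c.c. `c₂` with `γ^{(c₂)} = γ^{[c]}`. -/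
def Gset (c : Set ι) : Set (Set ι) :=
  {c₁ | c₁ ∈ Eset μ A c ∧ ∃ c₂, IsSCC (arcRel μ (A 0)) c₂ ∧
    sccReach (arcRel μ (A 0)) c₁ c₂ ∧ gammaSCC μ A c₂ = gammaDown μ A c}

/-- The s.c.c. `c` is dominating: `G_c = {c}`. -/
def Dominating (c : Set ι) : Prop :=
  Gset μ A c = {c}

/-- `max {γ^{(c)} : c s.c.c. with i → c}`. -/
def cycleTime (i : ι) : EReal :=
  ⨆ (c : Set ι) (_ : IsSCC (arcRel μ (A 0)) c ∧ nodeReach (arcRel μ (A 0)) i c), gammaSCC μ A c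

end Components

end

/-! Products over windows of time give two subadditive cocycles: the maximum of a window product,
which is a cocycle for the shift, and minus the minimum of a window product that ends at time `0`,
which is one for the inverse shift. If blocks of cost at most `u m` start almost everywhere, then a
greedy cover of a long window by such blocks, together with Birkhoff's theorem for the few times
that remain uncovered, bounds the cost of the window by about `u` times its length; this needs no
Lyapunov exponent to exist beforehand, and proves that those of the components do.

For the upper bound, an optimal path stays in a strongly connected component, whose exponent bounds
it, until it leaves for components that are treated by induction on the graph. For the lower bound,
hypothesis 2 bounds the past windows in a dominating component from below, and hypothesis 3 provides
from any other component a finite path to nodes of `H_c` that are treated by induction. Covering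
`[0, N)` backwards from `N` by past windows transfers this lower bound to `x(N, 0)`. -/

noncomputable section

/-! ### Birkhoff sums of an ergodic map -/

section BirkhoffSums

variable {α : Type*} {T : α → α} {f : α → ℝ}

/-- The maximum of `0` and the first `n` Birkhoff sums of `f`, in the recursive form on which the
maximal ergodic theorem rests. -/
def maxBirkhoff (T : α → α) (f : α → ℝ) : ℕ → α → ℝ
  | 0, _ => 0
  | n + 1, x => max 0 (f x + maxBirkhoff T f n (T x))

theorem maxBirkhoff_nonneg (T : α → α) (f : α → ℝ) (n : ℕ) (x : α) : 0 ≤ maxBirkhoff T f n x := by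
  cases n with
  | zero => exact le_rfl
  | succ n => exact le_max_left _ _

theorem monotone_maxBirkhoff (T : α → α) (f : α → ℝ) (x : α) :
    Monotone fun n => maxBirkhoff T f n x := by
  refine monotone_nat_of_le_succ fun n => ?_
  induction n generalizing x with
  | zero => exact le_max_left _ _
  | succ n ih => exact max_le_max le_rfl (add_le_add_right (ih (T x)) _)

theorem birkhoffSum_le_maxBirkhoff (T : α → α) (f : α → ℝ) (n : ℕ) (x : α) :
    birkhoffSum T f n x ≤ maxBirkhoff T f n x := by
  induction n generalizing x with
  | zero => simp [maxBirkhoff]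
  | succ n ih =>
    rw [birkhoffSum_succ']
    exact le_max_of_le_right (add_le_add_right (ih (T x)) _)

theorem maxBirkhoff_succ_sub (T : α → α) (f : α → ℝ) (n : ℕ) (x : α) :
    maxBirkhoff T f (n + 1) x - maxBirkhoff T f n (T x) = max (-maxBirkhoff T f n (T x)) (f x) := by
  rw [maxBirkhoff, ← max_sub_sub_right, zero_sub, add_sub_cancel_right]

theorem bddAbove_maxBirkhoff_comp_iff (x : α) :
    BddAbove (Set.range fun n => maxBirkhoff T f n (T x)) ↔
      BddAbove (Set.range fun n => maxBirkhoff T f n x) := by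
  constructor <;> rintro ⟨C, hC⟩ <;> rw [mem_upperBounds, Set.forall_mem_range] at hC
  · refine ⟨max 0 (f x + C), Set.forall_mem_range.2 fun n => ?_⟩
    exact (monotone_maxBirkhoff T f x n.le_succ).trans
      (max_le_max le_rfl (add_le_add_right (hC n) _))
  · refine ⟨C - f x, Set.forall_mem_range.2 fun n => ?_⟩
    exact le_sub_iff_add_le'.2 ((le_max_right _ _).trans (hC (n + 1)))

variable [MeasurableSpace α] {ν : Measure α}

theorem integrable_maxBirkhoff [IsFiniteMeasure ν] (hT : MeasurePreserving T ν ν)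
    (hf : Integrable f ν) (n : ℕ) : Integrable (maxBirkhoff T f n) ν := by
  induction n with
  | zero => exact integrable_const 0
  | succ n ih =>
    exact (integrable_const (0 : ℝ)).sup (hf.add (hT.integrable_comp_of_integrable ih))

theorem integral_maxBirkhoff_succ_sub_nonneg [IsFiniteMeasure ν] (hT : MeasurePreserving T ν ν)
    (hf : Integrable f ν) (n : ℕ) :
    0 ≤ ∫ x, (maxBirkhoff T f (n + 1) x - maxBirkhoff T f n (T x)) ∂ν := by
  have hint := integrable_maxBirkhoff hT hf
  have hcomp : ∫ x, maxBirkhoff T f n (T x) ∂ν = ∫ x, maxBirkhoff T f n x ∂ν := by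
    rw [← integral_map hT.aemeasurable (by rw [hT.map_eq]; exact (hint n).aestronglyMeasurable),
      hT.map_eq]
  have hsub : ∫ x, (maxBirkhoff T f (n + 1) x - maxBirkhoff T f n (T x)) ∂ν =
      ∫ x, maxBirkhoff T f (n + 1) x ∂ν - ∫ x, maxBirkhoff T f n (T x) ∂ν :=
    integral_sub (hint _) (hT.integrable_comp_of_integrable (hint n))
  rw [hsub, hcomp, sub_nonneg]
  exact integral_mono (hint n) (hint _) fun x => monotone_maxBirkhoff T f x n.le_succ

theorem integral_nonneg_of_ae_not_bddAbove_maxBirkhoff [IsFiniteMeasure ν]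
    (hT : MeasurePreserving T ν ν) (hf : Integrable f ν)
    (h : ∀ᵐ x ∂ν, ¬ BddAbove (Set.range fun n => maxBirkhoff T f n x)) : 0 ≤ ∫ x, f x ∂ν := by
  have hint := integrable_maxBirkhoff hT hf
  have hlim : Tendsto (fun n => ∫ x, (maxBirkhoff T f (n + 1) x - maxBirkhoff T f n (T x)) ∂ν)
      atTop (𝓝 (∫ x, f x ∂ν)) := by
    refine tendsto_integral_of_dominated_convergence (fun x => |f x|) (fun n => ?_) hf.abs
      (fun n => .of_forall fun x => ?_) ?_
    · exact ((hint (n + 1)).sub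
        (hT.integrable_comp_of_integrable (hint n))).aestronglyMeasurable
    · rw [maxBirkhoff_succ_sub, Real.norm_eq_abs, abs_le]
      exact ⟨(neg_abs_le _).trans (le_max_right _ _), max_le
        ((neg_nonpos.2 (maxBirkhoff_nonneg T f n _)).trans (abs_nonneg _)) (le_abs_self _)⟩
    · filter_upwards [h] with x hx
      rw [← bddAbove_maxBirkhoff_comp_iff] at hx
      have hlarge : ∀ᶠ n in atTop, -f x ≤ maxBirkhoff T f n (T x) :=
        (tendsto_atTop_atTop_of_monotone' (monotone_maxBirkhoff T f (T x)) hx).eventually_ge_atTop _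
      refine tendsto_const_nhds.congr' (hlarge.mono fun n hn => ?_)
      exact ((maxBirkhoff_succ_sub T f n x).trans (max_eq_right (neg_le.2 hn))).symm
  exact ge_of_tendsto' hlim (integral_maxBirkhoff_succ_sub_nonneg hT hf)

theorem nullMeasurableSet_bddAbove_range {g : ℕ → α → ℝ} (hg : ∀ n, AEMeasurable (g n) ν) :
    NullMeasurableSet {x | BddAbove (Set.range fun n => g n x)} ν := by
  have : {x | BddAbove (Set.range fun n => g n x)} = ⋃ C : ℕ, ⋂ n, {x | g n x ≤ C} := by
    ext x
    simp only [Set.mem_ofPred_eq, Set.mem_iUnion, Set.mem_iInter]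
    exact ⟨fun ⟨C, hC⟩ => (exists_nat_ge C).imp fun D hD n => (hC ⟨n, rfl⟩).trans hD,
      fun ⟨C, hC⟩ => ⟨C, Set.forall_mem_range.2 hC⟩⟩
  rw [this]
  exact .iUnion fun C => .iInter fun n => nullMeasurableSet_le (hg n) aemeasurable_const

theorem ae_bddAbove_birkhoffSum [IsFiniteMeasure ν] (hT : Ergodic T ν) (hf : Integrable f ν)
    (hneg : ∫ x, f x ∂ν < 0) : ∀ᵐ x ∂ν, BddAbove (Set.range fun n => birkhoffSum T f n x) := by
  have hint := integrable_maxBirkhoff hT.toMeasurePreserving hf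
  rcases hT.quasiErgodic.ae_mem_or_ae_notMem₀
    (nullMeasurableSet_bddAbove_range fun n => (hint n).aemeasurable)
    (.of_forall fun x => propext (bddAbove_maxBirkhoff_comp_iff x)) with h | h
  · filter_upwards [h] with x ⟨C, hC⟩
    exact ⟨C, Set.forall_mem_range.2 fun n =>
      (birkhoffSum_le_maxBirkhoff T f n x).trans (hC ⟨n, rfl⟩)⟩
  · exact absurd (integral_nonneg_of_ae_not_bddAbove_maxBirkhoff hT.toMeasurePreserving hf h)
      hneg.not_ge

theorem ae_eventually_birkhoffSum_le [IsProbabilityMeasure ν] (hT : Ergodic T ν)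
    (hf : Integrable f ν) {v : ℝ} (hv : ∫ x, f x ∂ν < v) :
    ∀ᵐ x ∂ν, ∀ᶠ n : ℕ in atTop, birkhoffSum T f n x ≤ v * n := by
  obtain ⟨w, hw, hwv⟩ := exists_between hv
  have hneg : ∫ x, (f x - w) ∂ν < 0 := by
    simpa [integral_sub hf (integrable_const w)] using hw
  have hint : Integrable (fun x => f x - w) ν := hf.sub (integrable_const w)
  filter_upwards [ae_bddAbove_birkhoffSum hT hint hneg] with x ⟨C, hC⟩
  have hlin : Tendsto (fun n : ℕ => (v - w) * n) atTop atTop :=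
    tendsto_natCast_atTop_atTop.const_mul_atTop (sub_pos.2 hwv)
  filter_upwards [hlin.eventually_ge_atTop C] with n hn
  have hsum : birkhoffSum T (fun x => f x - w) n x = birkhoffSum T f n x - n * w := by
    simp [birkhoffSum]
  linarith [hC ⟨n, rfl⟩]

theorem exists_integral_max_sub_lt (hf : Integrable f ν) {ε : ℝ} (hε : 0 < ε) :
    ∃ M : ℝ, ∫ x, max (f x - M) 0 ∂ν < ε := by
  have hlim : Tendsto (fun n : ℕ => ∫ x, max (f x - n) 0 ∂ν) atTop (𝓝 (∫ _, 0 ∂ν)) := by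
    refine tendsto_integral_of_dominated_convergence (fun x => |f x|) (fun n => ?_) hf.abs
      (fun n => .of_forall fun x => ?_) (.of_forall fun x => ?_)
    · exact (hf.aestronglyMeasurable.sub aestronglyMeasurable_const).sup
        aestronglyMeasurable_const
    · rw [Real.norm_of_nonneg (le_max_right _ _)]
      exact max_le ((sub_le_self _ n.cast_nonneg).trans (le_abs_self _)) (abs_nonneg _)
    · refine tendsto_const_nhds.congr' ?_
      filter_upwards [eventually_ge_atTop ⌈f x⌉₊] with n hn
      exact (max_eq_right (sub_nonpos.2 (Nat.ceil_le.1 hn))).symm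
  rw [integral_zero] at hlim
  exact (hlim.eventually (gt_mem_nhds hε)).exists.imp' _ fun _ => id

theorem ae_eventually_forall_le_mul [IsProbabilityMeasure ν] (hT : Ergodic T ν)
    (hf : Integrable f ν) {ε : ℝ} (hε : 0 < ε) :
    ∀ᵐ x ∂ν, ∀ᶠ n : ℕ in atTop, ∀ k ≤ n, f (T^[k] x) ≤ ε * n := by
  obtain ⟨M, hM⟩ := exists_integral_max_sub_lt hf (half_pos hε)
  set g : α → ℝ := fun x => max (f x - M) 0
  have hg : Integrable g ν := (hf.sub (integrable_const M)).pos_part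
  have hlin : Tendsto (fun n : ℕ => ε / 2 * n) atTop atTop :=
    tendsto_natCast_atTop_atTop.const_mul_atTop (half_pos hε)
  filter_upwards [ae_eventually_birkhoffSum_le hT hg hM] with x hx
  filter_upwards [(tendsto_add_atTop_nat 1).eventually hx,
    hlin.eventually_ge_atTop (M + ε / 2)] with n hn hMn k hk
  have hterm : g (T^[k] x) ≤ birkhoffSum T g (n + 1) x :=
    Finset.single_le_sum (f := fun k => g (T^[k] x)) (fun _ _ => le_max_right _ _)
      (Finset.mem_range.2 (Nat.lt_succ_of_le hk))
  have hfg : f (T^[k] x) - M ≤ g (T^[k] x) := le_max_left _ _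
  push_cast at hn
  linarith

end BirkhoffSums

/-! ### Subadditive cocycles -/

/-- A subadditive cocycle with extended real values over `T`. Subadditivity is stated through real
upper bounds, because `⊤ + ⊥` is a junk value. -/
structure IsSubadditiveCocycle {α : Type*} (T : α → α) (f : ℕ → α → EReal) : Prop where
  zero_le : ∀ x, f 0 x ≤ 0
  add_le : ∀ (m n : ℕ) (x : α) (r r' : ℝ), f m x ≤ r → f n (T^[m] x) ≤ r' →
    f (m + n) x ≤ ((r + r' : ℝ) : EReal)

/-- The points at which no block of length `m ∈ [1, K]` with cost at most `u m` starts. -/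
def badSet {α : Type*} (f : ℕ → α → EReal) (u : ℝ) (K : ℕ) : Set α :=
  {x | ∀ m : ℕ, 1 ≤ m → m ≤ K → ((u * m : ℝ) : EReal) < f m x}

/-- A bound for the excess over `u` of a single step of cost at most `p`, charged at the bad points
only. -/
def badCost {α : Type*} (f : ℕ → α → EReal) (p : α → ℝ) (u : ℝ) (K : ℕ) : α → ℝ :=
  (badSet f u K).indicator fun x => |p x| + |u|

section Cocycles

variable {α : Type*} {T : α → α} {f : ℕ → α → EReal} {p : α → ℝ} {u : ℝ} {K : ℕ}

theorem badCost_nonneg (x : α) : 0 ≤ badCost f p u K x :=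
  Set.indicator_nonneg (fun _ _ => add_nonneg (abs_nonneg _) (abs_nonneg _)) x

theorem birkhoffSum_badCost_nonneg (n : ℕ) (x : α) :
    0 ≤ birkhoffSum T (badCost f p u K) n x :=
  Finset.sum_nonneg fun _ _ => badCost_nonneg _

theorem IsSubadditiveCocycle.le_birkhoffSum (hf : IsSubadditiveCocycle T f) {x : α} {n : ℕ}
    (hstep : ∀ k < n, f 1 (T^[k] x) ≤ p (T^[k] x)) : f n x ≤ (birkhoffSum T p n x : ℝ) := by
  induction n with
  | zero => simpa using hf.zero_le x
  | succ n ih =>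
    rw [birkhoffSum_succ]
    exact hf.add_le n 1 x _ _ (ih fun k hk => hstep k (hk.trans n.lt_succ_self))
      (hstep n n.lt_succ_self)

theorem IsSubadditiveCocycle.le_of_length_le (hf : IsSubadditiveCocycle T f) {M : ℝ} (hM : 0 ≤ M)
    (u : ℝ) {n : ℕ} (hn : n ≤ K) {x : α} (hstep : ∀ k < n, f 1 (T^[k] x) ≤ p (T^[k] x))
    (hpM : ∀ k < n, p (T^[k] x) ≤ M) : f n x ≤ ((u * n + K * (M + |u|) : ℝ) : EReal) := by
  refine (hf.le_birkhoffSum hstep).trans (EReal.coe_le_coe_iff.2 ?_)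
  have hsum : birkhoffSum T p n x ≤ n * M := by
    simpa [birkhoffSum] using Finset.sum_le_sum fun k hk => hpM k (Finset.mem_range.1 hk)
  have hle : (n : ℝ) * (M + |u|) ≤ K * (M + |u|) := by gcongr
  have habs : -(u * n) ≤ n * |u| := by
    nlinarith [neg_abs_le u, n.cast_nonneg (α := ℝ)]
  linarith

/-- An orbit segment is covered from left to right by blocks of length at most `K` and cost at most
`u` per step, and by single steps from bad points; the last block may not fit. -/
theorem IsSubadditiveCocycle.le_greedy (hf : IsSubadditiveCocycle T f) {M : ℝ} (hM : 0 ≤ M)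
    (u : ℝ) (K n : ℕ) (x : α) (hstep : ∀ k < n, f 1 (T^[k] x) ≤ p (T^[k] x))
    (hpM : ∀ k < n, p (T^[k] x) ≤ M) :
    f n x ≤ ((u * n + birkhoffSum T (badCost f p u K) n x + K * (M + |u|) : ℝ) : EReal) := by
  induction n using Nat.strong_induction_on generalizing x with
  | _ n ih =>
  have hsplit : ∀ m ≤ n, 1 ≤ m → ∀ r : ℝ, f m x ≤ r →
      r ≤ u * m + birkhoffSum T (badCost f p u K) m x →
      f n x ≤ ((u * n + birkhoffSum T (badCost f p u K) n x + K * (M + |u|) : ℝ) : EReal) := by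
    intro m hmn hm r hr hrle
    have hrest := ih (n - m) (by omega) (T^[m] x)
      (fun k hk => by simpa only [← Function.iterate_add_apply] using hstep (k + m) (by omega))
      (fun k hk => by simpa only [← Function.iterate_add_apply] using hpM (k + m) (by omega))
    have hadd := hf.add_le m (n - m) x _ _ hr hrest
    have hsum := birkhoffSum_add T (badCost f p u K) m (n - m) x
    rw [Nat.add_sub_cancel' hmn] at hadd hsum
    refine hadd.trans (EReal.coe_le_coe_iff.2 ?_)
    rw [hsum, Nat.cast_sub hmn]
    linarith
  by_cases hx : x ∈ badSet f u K
  · rcases n.eq_zero_or_pos with rfl | hn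
    · exact (hf.le_of_length_le hM u K.zero_le hstep hpM).trans (by simp)
    · refine hsplit 1 hn le_rfl (p x) (hstep 0 hn) ?_
      rw [birkhoffSum_one, badCost, Set.indicator_of_mem hx]
      push_cast
      linarith [le_abs_self (p x), neg_abs_le u]
  · simp only [badSet, Set.mem_ofPred_eq, not_forall, not_lt] at hx
    obtain ⟨m, hm, hmK, hfm⟩ := hx
    rcases le_or_gt m n with hmn | hnm
    · exact hsplit m hmn hm _ hfm (le_add_of_nonneg_right (birkhoffSum_badCost_nonneg m x))
    · refine (hf.le_of_length_le hM u (hnm.le.trans hmK) hstep hpM).trans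
        (EReal.coe_le_coe_iff.2 ?_)
      linarith [birkhoffSum_badCost_nonneg (T := T) (f := f) (p := p) (u := u) (K := K) n x]

variable [MeasurableSpace α] {ν : Measure α}

theorem measurableSet_badSet (hfm : ∀ n, Measurable (f n)) (u : ℝ) (K : ℕ) :
    MeasurableSet (badSet f u K) := by
  simp only [badSet, Set.ofPred_forall]
  exact .iInter fun m => .iInter fun _ => .iInter fun _ =>
    measurableSet_lt measurable_const (hfm m)

theorem integrable_badCost [IsFiniteMeasure ν] (hfm : ∀ n, Measurable (f n)) (hp : Integrable p ν)
    (u : ℝ) (K : ℕ) : Integrable (badCost f p u K) ν :=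
  (hp.abs.add (integrable_const _)).indicator (measurableSet_badSet hfm u K)

theorem exists_integral_badCost_lt [IsFiniteMeasure ν] (hfm : ∀ n, Measurable (f n))
    (hp : Integrable p ν) (hgood : ∀ᵐ x ∂ν, ∃ m : ℕ, 1 ≤ m ∧ f m x ≤ ((u * m : ℝ) : EReal))
    {ε : ℝ} (hε : 0 < ε) : ∃ K, ∫ x, badCost f p u K x ∂ν < ε := by
  have hanti : Antitone (badSet f u) := fun K L hKL x hx m h1 h2 => hx m h1 (h2.trans hKL)
  have hlim := tendsto_setIntegral_of_antitone (fun K => measurableSet_badSet hfm u K) hanti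
    ⟨0, (hp.abs.add (integrable_const |u|)).integrableOn⟩
  have hnull : ν (⋂ K, badSet f u K) = 0 := by
    refine measure_mono_null (fun x hx => ?_) (ae_iff.1 hgood)
    rintro ⟨m, h1, h2⟩
    exact (Set.mem_iInter.1 hx m m h1 le_rfl).not_ge h2
  rw [setIntegral_measure_zero _ hnull] at hlim
  obtain ⟨K, hK⟩ := (hlim.eventually (gt_mem_nhds hε)).exists
  exact ⟨K, by rwa [badCost, integral_indicator (measurableSet_badSet hfm u K)]⟩

theorem exists_ae_eventually_greedyError_le [IsProbabilityMeasure ν] {S : α → α} (hS : Ergodic S ν)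
    (hfm : ∀ n, Measurable (f n)) (hp : Integrable p ν)
    (hgood : ∀ᵐ x ∂ν, ∃ m : ℕ, 1 ≤ m ∧ f m x ≤ ((u * m : ℝ) : EReal)) {ε : ℝ} (hε : 0 < ε) :
    ∃ K : ℕ, ∀ᵐ x ∂ν, ∀ᶠ N : ℕ in atTop, ∃ M : ℝ, 0 ≤ M ∧ (∀ k ≤ N, p (S^[k] x) ≤ M) ∧
      birkhoffSum S (badCost f p u K) (N + 1) x + K * (M + |u|) ≤ ε * N := by
  obtain ⟨K, hK⟩ := exists_integral_badCost_lt hfm hp hgood (by positivity : 0 < ε / 4)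
  refine ⟨K, ?_⟩
  have hδ : 0 < ε / (4 * (K + 1)) := by positivity
  have hKδ : K * (ε / (4 * (K + 1))) ≤ ε / 4 := by
    rw [mul_div_assoc', div_le_div_iff₀ (by positivity) (by norm_num)]
    nlinarith
  have hlin : Tendsto (fun N : ℕ => ε / 2 * N) atTop atTop :=
    tendsto_natCast_atTop_atTop.const_mul_atTop (half_pos hε)
  filter_upwards [ae_eventually_birkhoffSum_le hS (integrable_badCost hfm hp u K) hK,
    ae_eventually_forall_le_mul hS hp hδ] with x hcost hstep
  filter_upwards [(tendsto_add_atTop_nat 1).eventually hcost, hstep,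
    hlin.eventually_ge_atTop (ε / 4 + K * |u|)] with N hcostN hstepN hN
  refine ⟨ε / (4 * (K + 1)) * N, by positivity, hstepN, ?_⟩
  have hKN := mul_le_mul_of_nonneg_right hKδ N.cast_nonneg
  push_cast at hcostN
  linarith

theorem ae_forall_iterate (hT : MeasurePreserving T ν ν) {P : α → Prop} (h : ∀ᵐ x ∂ν, P x) :
    ∀ᵐ x ∂ν, ∀ k : ℕ, P (T^[k] x) :=
  ae_all_iff.2 fun k => (hT.iterate k).quasiMeasurePreserving.ae h

namespace IsSubadditiveCocycle

theorem ae_eventually_segment_le [IsProbabilityMeasure ν] (hf : IsSubadditiveCocycle T f)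
    (hT : Ergodic T ν) (hfm : ∀ n, Measurable (f n)) (hp : Integrable p ν)
    (hfp : ∀ᵐ x ∂ν, f 1 x ≤ p x)
    (hgood : ∀ᵐ x ∂ν, ∃ m : ℕ, 1 ≤ m ∧ f m x ≤ ((u * m : ℝ) : EReal)) {ε : ℝ} (hε : 0 < ε) :
    ∀ᵐ x ∂ν, ∀ᶠ N : ℕ in atTop, ∀ s n, s + n ≤ N →
      f n (T^[s] x) ≤ ((u * n + ε * N : ℝ) : EReal) := by
  obtain ⟨K, hK⟩ := exists_ae_eventually_greedyError_le hT hfm hp hgood hε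
  filter_upwards [hK, ae_forall_iterate hT.toMeasurePreserving hfp] with x herr hstep
  filter_upwards [herr] with N ⟨M, hM, hpM, hN⟩ s n hsn
  refine (hf.le_greedy hM u K n (T^[s] x)
    (fun k _ => by simpa only [← Function.iterate_add_apply] using hstep (k + s))
    (fun k _ => by simpa only [← Function.iterate_add_apply] using hpM (k + s) (by omega))).trans
    (EReal.coe_le_coe_iff.2 ?_)
  have hsum : birkhoffSum T (badCost f p u K) (s + n) x ≤
      birkhoffSum T (badCost f p u K) (N + 1) x :=
    Finset.sum_le_sum_of_subset_of_nonneg (Finset.range_mono (by omega))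
      fun _ _ _ => badCost_nonneg _
  rw [birkhoffSum_add] at hsum
  linarith [birkhoffSum_badCost_nonneg (T := T) (f := f) (p := p) (u := u) (K := K) s x]

/-- Blocks over `T` are read along the orbit of `S`, that is, backwards. -/
theorem ae_eventually_le_of_leftInverse [IsProbabilityMeasure ν] {S : α → α}
    (hf : IsSubadditiveCocycle T f) (hS : Ergodic S ν) (hTS : Function.LeftInverse T S)
    (hfm : ∀ n, Measurable (f n)) (hp : Integrable p ν) (hfp : ∀ᵐ x ∂ν, f 1 x ≤ p x)
    (hgood : ∀ᵐ x ∂ν, ∃ m : ℕ, 1 ≤ m ∧ f m x ≤ ((u * m : ℝ) : EReal)) {ε : ℝ} (hε : 0 < ε) :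
    ∀ᵐ x ∂ν, ∀ᶠ N : ℕ in atTop, f N (S^[N] x) ≤ (((u + ε) * N : ℝ) : EReal) := by
  obtain ⟨K, hK⟩ := exists_ae_eventually_greedyError_le hS hfm hp hgood hε
  filter_upwards [hK, ae_forall_iterate hS.toMeasurePreserving hfp] with x herr hstep
  filter_upwards [herr] with N ⟨M, hM, hpM, hN⟩
  have hback : ∀ k ≤ N, T^[k] (S^[N] x) = S^[N - k] x := fun k hk => by
    conv_lhs => rw [← Nat.add_sub_cancel' hk, Function.iterate_add_apply]
    exact hTS.iterate k _
  refine (hf.le_greedy (p := p) hM u K N (S^[N] x) (fun k hk => ?_) (fun k hk => ?_)).trans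
    (EReal.coe_le_coe_iff.2 ?_)
  · rw [hback k hk.le]; exact hstep _
  · rw [hback k hk.le]; exact hpM _ (N.sub_le k)
  · have hsum : birkhoffSum T (badCost f p u K) N (S^[N] x) ≤
        birkhoffSum S (badCost f p u K) (N + 1) x := by
      rw [birkhoffSum_succ', birkhoffSum, ← Finset.sum_range_reflect]
      refine (Finset.sum_le_sum fun k hk => le_of_eq ?_).trans
        (le_add_of_nonneg_left (badCost_nonneg x))
      have hk := Finset.mem_range.1 hk
      rw [hback _ (by omega), ← Function.iterate_succ_apply]
      congr 2
      omega
    linarith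

theorem ae_eventually_le_of_integral_lt [IsProbabilityMeasure ν] (hf : IsSubadditiveCocycle T f)
    (hT : Ergodic T ν) (hp : Integrable p ν) (hfp : ∀ᵐ x ∂ν, f 1 x ≤ p x)
    (hu : ∫ x, p x ∂ν < u) : ∀ᵐ x ∂ν, ∀ᶠ n : ℕ in atTop, f n x ≤ ((u * n : ℝ) : EReal) := by
  filter_upwards [ae_forall_iterate hT.toMeasurePreserving hfp,
    ae_eventually_birkhoffSum_le hT hp hu] with x hstep hx
  exact hx.mono fun n hn =>
    (hf.le_birkhoffSum fun k _ => hstep k).trans (EReal.coe_le_coe_iff.2 hn)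

end IsSubadditiveCocycle

/-- The points along whose orbits the cocycle infinitely often stays within a constant of the line
of slope `q`. -/
def linearBoundSet (f : ℕ → α → EReal) (q : ℝ) : Set α :=
  {x | ∃ C : ℕ, ∃ᶠ n : ℕ in atTop, f n x ≤ ((q * n + C : ℝ) : EReal)}

/-- The almost sure growth rate of a subadditive cocycle, as in Kingman's ergodic theorem. -/
def growthRate (ν : Measure α) (f : ℕ → α → EReal) : EReal :=
  ⨅ (q : ℝ) (_ : ∀ᵐ x ∂ν, x ∈ linearBoundSet f q), (q : EReal)

theorem measurableSet_linearBoundSet (hfm : ∀ n, Measurable (f n)) (q : ℝ) :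
    MeasurableSet (linearBoundSet f q) := by
  simp only [linearBoundSet, frequently_atTop, Set.ofPred_exists, Set.ofPred_forall,
    Set.ofPred_and]
  exact .iUnion fun C => .iInter fun N => .iUnion fun n => .inter (.const _)
    (measurableSet_le (hfm n) measurable_const)

namespace IsSubadditiveCocycle

theorem preimage_linearBoundSet_ae_le (hf : IsSubadditiveCocycle T f) (hfp : ∀ᵐ x ∂ν, f 1 x ≤ p x)
    (q : ℝ) : T ⁻¹' linearBoundSet f q ≤ᵐ[ν] linearBoundSet f q := by
  filter_upwards [hfp] with x hx
  rintro ⟨C, hC⟩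
  obtain ⟨D, hD⟩ := exists_nat_ge (p x + C - q)
  refine ⟨D, frequently_atTop.2 fun N => ?_⟩
  obtain ⟨n, hn, hfn⟩ := frequently_atTop.1 hC N
  refine ⟨1 + n, by omega, (hf.add_le 1 n x _ _ hx hfn).trans (EReal.coe_le_coe_iff.2 ?_)⟩
  push_cast
  linarith

theorem ae_mem_or_ae_notMem_linearBoundSet [IsFiniteMeasure ν] (hf : IsSubadditiveCocycle T f)
    (hT : Ergodic T ν) (hfm : ∀ n, Measurable (f n)) (hfp : ∀ᵐ x ∂ν, f 1 x ≤ p x) (q : ℝ) :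
    (∀ᵐ x ∂ν, x ∈ linearBoundSet f q) ∨ ∀ᵐ x ∂ν, x ∉ linearBoundSet f q := by
  rcases hT.ae_empty_or_univ_of_preimage_ae_le
    (measurableSet_linearBoundSet hfm q).nullMeasurableSet
    (hf.preimage_linearBoundSet_ae_le hfp q) with h | h
  · exact .inr (eventuallyEq_empty.1 h)
  · exact .inl (eventuallyEq_univ.1 h)

theorem growthRate_ne_top [IsProbabilityMeasure ν] (hf : IsSubadditiveCocycle T f)
    (hT : Ergodic T ν) (hp : Integrable p ν) (hfp : ∀ᵐ x ∂ν, f 1 x ≤ p x) :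
    growthRate ν f ≠ ⊤ := by
  refine ne_top_of_le_ne_top (EReal.coe_ne_top (∫ x, p x ∂ν + 1)) (iInf₂_le _ ?_)
  filter_upwards [hf.ae_eventually_le_of_integral_lt hT hp hfp (lt_add_one _)] with x hx
  exact ⟨0, by simpa using hx.frequently⟩

theorem ae_eventually_segment_le_of_growthRate_lt [IsProbabilityMeasure ν]
    (hf : IsSubadditiveCocycle T f) (hT : Ergodic T ν) (hfm : ∀ n, Measurable (f n))
    (hp : Integrable p ν) (hfp : ∀ᵐ x ∂ν, f 1 x ≤ p x) {u : ℝ} (hu : growthRate ν f < u)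
    {ε : ℝ} (hε : 0 < ε) :
    ∀ᵐ x ∂ν, ∀ᶠ N : ℕ in atTop, ∀ s n, s + n ≤ N →
      f n (T^[s] x) ≤ ((u * n + ε * N : ℝ) : EReal) := by
  simp only [growthRate, iInf_lt_iff, EReal.coe_lt_coe_iff] at hu
  obtain ⟨q, hq, hqu⟩ := hu
  refine hf.ae_eventually_segment_le hT hfm hp hfp ?_ hε
  have hlin : Tendsto (fun n : ℕ => (u - q) * n) atTop atTop :=
    tendsto_natCast_atTop_atTop.const_mul_atTop (sub_pos.2 hqu)
  filter_upwards [hq] with x ⟨C, hC⟩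
  obtain ⟨n, hfn, hn, hCn⟩ := (hC.and_eventually
    ((eventually_ge_atTop 1).and (hlin.eventually_ge_atTop C))).exists
  exact ⟨n, hn, hfn.trans (EReal.coe_le_coe_iff.2 (by linarith))⟩

theorem ae_eventually_lt_of_lt_growthRate [IsFiniteMeasure ν] (hf : IsSubadditiveCocycle T f)
    (hT : Ergodic T ν) (hfm : ∀ n, Measurable (f n)) (hfp : ∀ᵐ x ∂ν, f 1 x ≤ p x)
    {v : ℝ} (hv : v < growthRate ν f) :
    ∀ᵐ x ∂ν, ∀ᶠ n : ℕ in atTop, ((v * n : ℝ) : EReal) < f n x := by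
  have hnot : ¬ ∀ᵐ x ∂ν, x ∈ linearBoundSet f v := fun h => hv.not_ge (iInf₂_le v h)
  filter_upwards [(hf.ae_mem_or_ae_notMem_linearBoundSet hT hfm hfp v).resolve_left hnot] with x hx
  have hzero : ¬ ∃ᶠ n : ℕ in atTop, f n x ≤ ((v * n + (0 : ℕ) : ℝ) : EReal) := fun h => hx ⟨0, h⟩
  simpa using hzero

end IsSubadditiveCocycle

end Cocycles

/-! ### Scaled limits -/

section Scaling

theorem mpScale_le_coe_iff {n : ℕ} (hn : n ≠ 0) {x : EReal} {u : ℝ} :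
    mpScale n x ≤ u ↔ x ≤ ((u * n : ℝ) : EReal) := by
  have hpos : (0 : ℝ) < n := Nat.cast_pos.2 (Nat.pos_of_ne_zero hn)
  induction x with
  | bot => simp [mpScale, EReal.coe_mul_bot_of_pos (inv_pos.2 hpos)]
  | coe r =>
    rw [mpScale, ← EReal.coe_mul, EReal.coe_le_coe_iff, EReal.coe_le_coe_iff,
      inv_mul_le_iff₀ hpos, mul_comm u]
  | top => simp [mpScale, EReal.coe_mul_top_of_pos (inv_pos.2 hpos), -EReal.coe_mul]

theorem coe_le_mpScale_iff {n : ℕ} (hn : n ≠ 0) {x : EReal} {u : ℝ} :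
    u ≤ mpScale n x ↔ ((u * n : ℝ) : EReal) ≤ x := by
  have hpos : (0 : ℝ) < n := Nat.cast_pos.2 (Nat.pos_of_ne_zero hn)
  induction x with
  | bot => simp [mpScale, EReal.coe_mul_bot_of_pos (inv_pos.2 hpos), -EReal.coe_mul]
  | coe r =>
    rw [mpScale, ← EReal.coe_mul, EReal.coe_le_coe_iff, EReal.coe_le_coe_iff,
      le_inv_mul_iff₀ hpos, mul_comm u]
  | top => simp [mpScale, EReal.coe_mul_top_of_pos (inv_pos.2 hpos)]

theorem eventually_le_of_tendsto_mpScale {f : ℕ → EReal} {g : EReal}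
    (h : Tendsto (fun n => mpScale n (f n)) atTop (𝓝 g)) {v : ℝ} (hv : v < g) :
    ∀ᶠ n : ℕ in atTop, ((v * n : ℝ) : EReal) ≤ f n := by
  filter_upwards [h.eventually_const_lt hv, eventually_ne_atTop 0] with n hn hn0
  exact (coe_le_mpScale_iff hn0).1 hn.le

theorem ae_tendsto_mpScale {Ω : Type*} [MeasurableSpace Ω] {μ : Measure Ω} {f : ℕ → Ω → EReal}
    {g : EReal}
    (hge : ∀ v : ℝ, v < g → ∀ᵐ ω ∂μ, ∀ᶠ n : ℕ in atTop, ((v * n : ℝ) : EReal) ≤ f n ω)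
    (hle : ∀ u : ℝ, g < u → ∀ᵐ ω ∂μ, ∀ᶠ n : ℕ in atTop, f n ω ≤ ((u * n : ℝ) : EReal)) :
    ∀ᵐ ω ∂μ, Tendsto (fun n => mpScale n (f n ω)) atTop (𝓝 g) := by
  have hge' : ∀ᵐ ω ∂μ, ∀ q : ℚ, ((q : ℝ) : EReal) < g →
      ∀ᶠ n : ℕ in atTop, (((q : ℝ) * n : ℝ) : EReal) ≤ f n ω :=
    ae_all_iff.2 fun q => eventually_imp_distrib_left.2 (hge q)
  have hle' : ∀ᵐ ω ∂μ, ∀ q : ℚ, g < ((q : ℝ) : EReal) →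
      ∀ᶠ n : ℕ in atTop, f n ω ≤ (((q : ℝ) * n : ℝ) : EReal) :=
    ae_all_iff.2 fun q => eventually_imp_distrib_left.2 (hle q)
  filter_upwards [hge', hle'] with ω hω hω'
  refine tendsto_order.2 ⟨fun b hb => ?_, fun b hb => ?_⟩
  · obtain ⟨q, hbq, hqg⟩ := EReal.lt_iff_exists_rat_btwn.1 hb
    filter_upwards [hω q hqg, eventually_ne_atTop 0] with n hn hn0
    exact hbq.trans_le ((coe_le_mpScale_iff hn0).2 hn)
  · obtain ⟨q, hgq, hqb⟩ := EReal.lt_iff_exists_rat_btwn.1 hb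
    filter_upwards [hω' q hgq, eventually_ne_atTop 0] with n hn hn0
    exact ((mpScale_le_coe_iff hn0).2 hn).trans_lt hqb

end Scaling

/-! ### Products over windows of time -/

/-- `windowAct F a s n v = a(s+n-1) ⊗ ⋯ ⊗ a(s) ⊗ v`, where all maxima run over the indices
in `F`. -/
def windowAct {ι : Type*} (F : Set ι) (a : ℤ → ι → ι → EReal) (s : ℤ) :
    ℕ → (ι → EReal) → ι → EReal
  | 0, v => v
  | n + 1, v => fun i => ⨆ j ∈ F, a (s + n) i j + windowAct F a s n v j

/-- The translation by `k` on two-sided sequences of matrices. -/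
def seqShift {ι : Type*} (k : ℤ) (a : ℤ → ι → ι → EReal) (n : ℤ) : ι → ι → EReal :=
  a (n + k)

theorem galoisConnection_add_coe (r : ℝ) :
    GaloisConnection (fun x : EReal => x + r) (fun x => x - r) := fun _ _ =>
  (EReal.le_sub_iff_add_le (by simp) (by simp)).symm

section Windows

variable {ι : Type*} {F G : Set ι} {a : ℤ → ι → ι → EReal} {s : ℤ} {v w : ι → EReal} {i j : ι}

theorem mpVec_subMat (I J : Set ι) (M : ι → ι → EReal) (v : ι → EReal) (i : I) :
    mpVec (subMat I J M) (fun j => v j) i = ⨆ j ∈ J, M i j + v j :=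
  iSup_subtype' (f := fun j _ => M i j + v j) |>.symm

theorem add_le_windowAct_succ (hj : j ∈ F) (n : ℕ) :
    a (s + n) i j + windowAct F a s n v j ≤ windowAct F a s (n + 1) v i :=
  le_iSup₂ (f := fun j _ => a (s + n) i j + windowAct F a s n v j) j hj

theorem windowAct_mono (hFG : F ⊆ G) (hvw : ∀ j ∈ F, v j ≤ w j) (n : ℕ) (hi : i ∈ F) :
    windowAct F a s n v i ≤ windowAct G a s n w i := by
  induction n generalizing i with
  | zero => exact hvw i hi
  | succ n ih =>
    exact iSup₂_le fun j hj => (add_le_add_right (ih hj) _).trans (add_le_windowAct_succ (hFG hj) n)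

theorem windowAct_add (F : Set ι) (a : ℤ → ι → ι → EReal) (s : ℤ) (m n : ℕ) (v : ι → EReal) :
    windowAct F a s (m + n) v = windowAct F a (s + m) n (windowAct F a s m v) := by
  induction n with
  | zero => rfl
  | succ n ih =>
    rw [← add_assoc]
    simp only [windowAct, ih, Nat.cast_add, add_assoc]

theorem windowAct_add_coe (F : Set ι) (a : ℤ → ι → ι → EReal) (s : ℤ) (n : ℕ) (v : ι → EReal)
    (r : ℝ) (i : ι) : windowAct F a s n (fun j => v j + r) i = windowAct F a s n v i + r := by
  induction n generalizing i with
  | zero => rfl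
  | succ n ih =>
    simp only [windowAct, ih, ← add_assoc]
    exact (galoisConnection_add_coe r).l_iSup₂.symm

theorem windowAct_le_add {r : ℝ} (hv : ∀ j ∈ F, v j ≤ r) (n : ℕ) (hi : i ∈ F) :
    windowAct F a s n v i ≤ windowAct F a s n 0 i + r := by
  rw [← windowAct_add_coe]
  exact windowAct_mono subset_rfl (by simpa using hv) n hi

theorem add_le_windowAct {r : ℝ} (hv : ∀ j ∈ F, r ≤ v j) (n : ℕ) (hi : i ∈ F) :
    windowAct F a s n 0 i + r ≤ windowAct F a s n v i := by
  rw [← windowAct_add_coe]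
  exact windowAct_mono subset_rfl (by simpa using hv) n hi

theorem windowAct_seqShift (F : Set ι) (k : ℤ) (a : ℤ → ι → ι → EReal) (s : ℤ) (n : ℕ)
    (v : ι → EReal) : windowAct F (seqShift k a) s n v = windowAct F a (s + k) n v := by
  induction n with
  | zero => rfl
  | succ n ih => simp only [windowAct, ih, seqShift, add_right_comm]

theorem pastAct_subMat (I : Set ι) (a : ℤ → ι → ι → EReal) (n : ℕ) (v : ι → EReal) (i : I) :
    pastAct (fun m => subMat I I (a m)) n (fun j => v j) i = windowAct I a (-n) n v i := by
  induction n generalizing v with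
  | zero => rfl
  | succ n ih =>
    have hstep : mpVec (subMat I I (a (-(n : ℤ) - 1))) (fun j => v j) =
        fun j : I => windowAct I a (-(n + 1 : ℕ)) 1 v j := by
      funext j
      simp only [mpVec_subMat, windowAct]
      push_cast
      ring_nf
    rw [pastAct, hstep, ih, add_comm n 1, windowAct_add]
    push_cast
    ring_nf

theorem xVec_subMat (F : Set ι) (a : ℤ → ι → ι → EReal) (n : ℕ) (i : F) :
    xVec (fun m => subMat F F (a m)) n i = windowAct F a 0 n 0 i := by
  induction n generalizing i with
  | zero => rfl
  | succ n ih =>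
    simp only [xVec, funext ih, mpVec_subMat, windowAct, zero_add]

theorem xVec_eq_windowAct (a : ℤ → ι → ι → EReal) (n : ℕ) :
    xVec a n = windowAct Set.univ a 0 n 0 := by
  induction n with
  | zero => rfl
  | succ n ih =>
    funext i
    simp [xVec, mpVec, windowAct, ih]

theorem measurable_windowAct [Countable ι] (F : Set ι) (s : ℤ) (n : ℕ) (v : ι → EReal) (i : ι) :
    Measurable fun a : ℤ → ι → ι → EReal => windowAct F a s n v i := by
  induction n generalizing i with
  | zero => exact measurable_const
  | succ n ih =>
    refine Measurable.biSup F F.to_countable fun j _ => ?_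
    exact (by fun_prop : Measurable fun a : ℤ → ι → ι → EReal => a (s + n) i j).add (ih j)

theorem measurableSet_forall_exists_ne_bot [Countable ι] (F G : Set ι) :
    MeasurableSet {a : ℤ → ι → ι → EReal | ∀ i ∈ F, ∃ j ∈ G, a 0 i j ≠ ⊥} := by
  simp only [Set.ofPred_forall, Set.ofPred_exists, Set.ofPred_and]
  exact .iInter fun i => .iInter fun _ => .iUnion fun j => (MeasurableSet.const _).inter
    (measurableSet_eq_fun (by fun_prop) (by fun_prop)).compl

theorem iterate_seqShift (k : ℤ) (n : ℕ) : (seqShift k)^[n] = seqShift (ι := ι) (n * k) := by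
  induction n with
  | zero =>
    funext a m
    simp [seqShift]
  | succ n ih =>
    funext a m
    simp only [Function.iterate_succ_apply, ih, seqShift]
    congr 1
    push_cast
    ring

theorem leftInverse_seqShift_neg (k : ℤ) :
    Function.LeftInverse (seqShift (-k)) (seqShift (ι := ι) k) := fun a => by
  funext m
  simp [seqShift]

theorem isSubadditiveCocycle_windowAct (F : Set ι) :
    IsSubadditiveCocycle (seqShift 1) fun n a => ⨆ i ∈ F, windowAct F a 0 n 0 i where
  zero_le _ := iSup₂_le fun _ _ => le_rfl
  add_le m n a r r' h h' := by
    simp only [iSup_le_iff, iterate_seqShift, windowAct_seqShift, mul_one, zero_add] at h h' ⊢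
    intro i hi
    rw [windowAct_add, zero_add, add_comm r, EReal.coe_add]
    exact (windowAct_le_add h n hi).trans (add_le_add_left (h' i hi) _)

/-- The backward cocycle, whose upper bounds are lower bounds for the products over the windows that
end at time `0`. -/
theorem isSubadditiveCocycle_neg_windowAct (F : Set ι) :
    IsSubadditiveCocycle (seqShift (-1)) fun n a => ⨆ i ∈ F, -windowAct F a (-n) n 0 i where
  zero_le _ := iSup₂_le fun _ _ => by simp [windowAct]
  add_le m n a r r' h h' := by
    simp only [iSup_le_iff, iterate_seqShift, windowAct_seqShift, EReal.neg_le, ← EReal.coe_neg]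
      at h h' ⊢
    intro i hi
    have hstart : (-(m + n : ℕ) : ℤ) = -n + m * -1 := by push_cast; ring
    have hmid : (-n + m * -1 + n : ℤ) = -m := by ring
    rw [add_comm m n, windowAct_add, add_comm n m, hstart, hmid, neg_add, EReal.coe_add]
    exact (add_le_add_left (h i hi) _).trans (add_le_windowAct h' m hi)

theorem measurable_iSup_windowAct [Countable ι] (F : Set ι) (n : ℕ) :
    Measurable fun a : ℤ → ι → ι → EReal => ⨆ i ∈ F, windowAct F a 0 n 0 i :=
  .biSup F F.to_countable fun i _ => measurable_windowAct F 0 n 0 i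

theorem measurable_iSup_neg_windowAct [Countable ι] (F : Set ι) (n : ℕ) :
    Measurable fun a : ℤ → ι → ι → EReal => ⨆ i ∈ F, -windowAct F a (-n) n 0 i :=
  .biSup F F.to_countable fun i _ => (measurable_windowAct F (-n) n 0 i).neg

end Windows

/-! ### Stationary ergodic sequences of matrices -/

/-- The translation as a measurable equivalence. -/
def seqShiftEquiv {ι : Type*} (k : ℤ) : (ℤ → ι → ι → EReal) ≃ᵐ (ℤ → ι → ι → EReal) where
  toFun := seqShift k
  invFun := seqShift (-k)
  left_inv := leftInverse_seqShift_neg k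
  right_inv a := by funext n; simp [seqShift]
  measurable_toFun := measurable_pi_lambda _ fun n => measurable_pi_apply (n + k)
  measurable_invFun := measurable_pi_lambda _ fun n => measurable_pi_apply (n + -k)

/-- The law of a random sequence of matrices on the space of two-sided sequences. -/
def seqLaw {Ω ι : Type*} [MeasurableSpace Ω] (μ : Measure Ω) (A : ℤ → Ω → ι → ι → EReal) :
    Measure (ℤ → ι → ι → EReal) :=
  μ.map fun ω n => A n ω

/-- The positive part of the largest entry of the matrix at time `0`. -/
def stepCost {ι : Type*} (a : ℤ → ι → ι → EReal) : ℝ :=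
  (max (⨆ i, ⨆ j, a 0 i j) 0).toReal

theorem le_stepCost {ι : Type*} [Finite ι] {a : ℤ → ι → ι → EReal} (ha : ∀ i j, a 0 i j ≠ ⊤)
    (i j : ι) : a 0 i j ≤ stepCost a := by
  have hsup : (⨆ i, ⨆ j, a 0 i j) ≠ ⊤ := by
    have : Nonempty ι := ⟨i⟩
    obtain ⟨i₀, hi₀⟩ := exists_eq_ciSup_of_finite (f := fun i => ⨆ j, a 0 i j)
    obtain ⟨j₀, hj₀⟩ := exists_eq_ciSup_of_finite (f := fun j => a 0 i₀ j)
    exact hi₀ ▸ hj₀ ▸ ha i₀ j₀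
  rw [stepCost, EReal.coe_toReal (max_lt hsup.lt_top EReal.zero_lt_top).ne
    (ne_bot_of_le_ne_bot EReal.zero_ne_bot (le_max_right _ _))]
  exact le_max_of_le_left (le_iSup₂ (f := fun i j => a 0 i j) i j)

theorem windowAct_one_le_stepCost {ι : Type*} [Finite ι] {a : ℤ → ι → ι → EReal}
    (ha : ∀ i j, a 0 i j ≠ ⊤) (F : Set ι) :
    ⨆ i ∈ F, windowAct F a 0 1 0 i ≤ stepCost a :=
  iSup₂_le fun i _ => iSup₂_le fun j _ => by simpa [windowAct] using le_stepCost ha i j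

theorem measurable_stepCost {ι : Type*} [Countable ι] : Measurable (stepCost (ι := ι)) := by
  refine (Measurable.max (.iSup fun i => .iSup fun j => ?_) measurable_const).ereal_toReal
  fun_prop

/-- The standing assumptions on the random matrices: they are measurable, have entries in `ℝ_max`,
form a stationary ergodic sequence, and the positive part of their largest entry is integrable. -/
structure IsIntegrableSequence {Ω ι : Type*} [MeasurableSpace Ω] (μ : Measure Ω)
    (A : ℤ → Ω → ι → ι → EReal) : Prop where
  measurable : ∀ n, Measurable (A n)
  ne_top : ∀ n ω i j, A n ω i j ≠ ⊤
  stationaryErgodic : StationaryErgodic μ A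
  integrable : Integrable (fun ω => (max (⨆ i, ⨆ j, A 0 ω i j) 0).toReal) μ

section StationarySequences

variable {Ω ι : Type*} [MeasurableSpace Ω] {μ : Measure Ω} {A : ℤ → Ω → ι → ι → EReal}

namespace StationaryErgodic

theorem ergodic_seqShift_one (h : StationaryErgodic μ A) : Ergodic (seqShift 1) (seqLaw μ A) := h

theorem ergodic_seqShift_neg_one (h : StationaryErgodic μ A) :
    Ergodic (seqShift (-1)) (seqLaw μ A) :=
  Ergodic.symm (e := seqShiftEquiv 1) h

theorem measurePreserving_seqShift (h : StationaryErgodic μ A) (k : ℤ) :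
    MeasurePreserving (seqShift k) (seqLaw μ A) (seqLaw μ A) := by
  obtain ⟨m, rfl | rfl⟩ := k.eq_nat_or_neg
  · simpa [iterate_seqShift] using h.ergodic_seqShift_one.toMeasurePreserving.iterate m
  · simpa [iterate_seqShift] using h.ergodic_seqShift_neg_one.toMeasurePreserving.iterate m

end StationaryErgodic

namespace IsIntegrableSequence

theorem aemeasurable (h : IsIntegrableSequence μ A) : AEMeasurable (fun ω n => A n ω) μ :=
  (measurable_pi_lambda _ h.measurable).aemeasurable

theorem isProbabilityMeasure_seqLaw [IsProbabilityMeasure μ] (h : IsIntegrableSequence μ A) :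
    IsProbabilityMeasure (seqLaw μ A) :=
  Measure.isProbabilityMeasure_map h.aemeasurable

theorem ae_translates (h : IsIntegrableSequence μ A) {P : (ℤ → ι → ι → EReal) → Prop}
    (hP : MeasurableSet {a | P a}) (hae : ∀ᵐ ω ∂μ, P fun n => A n ω) :
    ∀ᵐ ω ∂μ, ∀ k : ℤ, P (seqShift k fun n => A n ω) :=
  ae_all_iff.2 fun k => ae_of_ae_map h.aemeasurable
    ((h.stationaryErgodic.measurePreserving_seqShift k).quasiMeasurePreserving.ae
      ((ae_map_iff h.aemeasurable hP).2 hae))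

theorem integrable_stepCost [Countable ι] (h : IsIntegrableSequence μ A) :
    Integrable stepCost (seqLaw μ A) :=
  (integrable_map_measure measurable_stepCost.aestronglyMeasurable h.aemeasurable).2 h.integrable

theorem ae_seqLaw_ne_top [Countable ι] (h : IsIntegrableSequence μ A) :
    ∀ᵐ a ∂seqLaw μ A, ∀ i j, a 0 i j ≠ ⊤ := by
  refine (ae_map_iff h.aemeasurable ?_).2 (.of_forall fun ω => h.ne_top 0 ω)
  simp only [Set.ofPred_forall]
  exact .iInter fun i => .iInter fun j => (measurableSet_eq_fun (by fun_prop) (by fun_prop)).compl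

theorem ae_eq_bot_of_not_arcRel [Countable ι] (h : IsIntegrableSequence μ A) :
    ∀ᵐ ω ∂μ, ∀ (k : ℤ) (i j : ι), ¬ arcRel μ (A 0) i j → A k ω i j = ⊥ := by
  have hzero : ∀ᵐ ω ∂μ, ∀ i j, ¬ arcRel μ (A 0) i j → A 0 ω i j = ⊥ := by
    simp only [ae_all_iff]
    exact fun i j hij => ae_iff.2 (by simpa [arcRel] using hij)
  have hmeas : MeasurableSet
      {a : ℤ → ι → ι → EReal | ∀ i j, ¬ arcRel μ (A 0) i j → a 0 i j = ⊥} := by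
    simp only [Set.ofPred_forall]
    exact .iInter fun i => .iInter fun j => .iInter fun _ =>
      measurableSet_eq_fun (by fun_prop) (by fun_prop)
  filter_upwards [h.ae_translates hmeas hzero] with ω hω k
  simpa [seqShift] using hω k

theorem ae_seqLaw_windowAct_one_le [Finite ι] (h : IsIntegrableSequence μ A) (F : Set ι) :
    ∀ᵐ a ∂seqLaw μ A, ⨆ i ∈ F, windowAct F a 0 1 0 i ≤ stepCost a :=
  h.ae_seqLaw_ne_top.mono fun _ ha => windowAct_one_le_stepCost ha F

variable [Finite ι] [IsProbabilityMeasure μ]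

theorem gammaSCC_eq_growthRate (h : IsIntegrableSequence μ A) (c : Set ι) :
    gammaSCC μ A c =
      growthRate (seqLaw μ A) fun n a => ⨆ i ∈ c, windowAct c a 0 n 0 i := by
  have := h.isProbabilityMeasure_seqLaw
  have hf := isSubadditiveCocycle_windowAct c
  have hT := h.stationaryErgodic.ergodic_seqShift_one
  have hfp := h.ae_seqLaw_windowAct_one_le c
  have hsup : ∀ n ω, ⨆ i : c, xVec (fun m => subMat c c (A m ω)) n i =
      ⨆ i ∈ c, windowAct c (fun m => A m ω) 0 n 0 i := fun n ω => by
    simp only [xVec_subMat c fun m => A m ω]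
    exact iSup_subtype' (f := fun i _ => windowAct c (fun m => A m ω) 0 n 0 i) |>.symm
  refine IsLyapunov.lyapunov_eq ?_
  simp only [IsLyapunov, hsup]
  refine ae_tendsto_mpScale (fun v hv => ?_) (fun u hu => ?_)
  · filter_upwards [ae_of_ae_map h.aemeasurable (hf.ae_eventually_lt_of_lt_growthRate hT
      (measurable_iSup_windowAct c) hfp hv)] with ω hω using hω.mono fun n hn => hn.le
  · obtain ⟨q, hgq, hqu⟩ := EReal.lt_iff_exists_real_btwn.1 hu
    filter_upwards [ae_of_ae_map h.aemeasurable (hf.ae_eventually_segment_le_of_growthRate_lt hT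
      (measurable_iSup_windowAct c) h.integrable_stepCost hfp hgq
      (sub_pos.2 (EReal.coe_lt_coe_iff.1 hqu)))] with ω hω
    filter_upwards [hω] with n hn
    refine (hn 0 n (zero_add n).le).trans (EReal.coe_le_coe_iff.2 (le_of_eq ?_))
    ring

theorem gammaSCC_ne_top (h : IsIntegrableSequence μ A) (c : Set ι) : gammaSCC μ A c ≠ ⊤ := by
  have := h.isProbabilityMeasure_seqLaw
  rw [h.gammaSCC_eq_growthRate c]
  exact (isSubadditiveCocycle_windowAct c).growthRate_ne_top
    h.stationaryErgodic.ergodic_seqShift_one h.integrable_stepCost (h.ae_seqLaw_windowAct_one_le c)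

theorem ae_eventually_windowAct_le_of_gammaSCC_lt (h : IsIntegrableSequence μ A) {c : Set ι}
    {u : ℝ} (hu : gammaSCC μ A c < u) {ε : ℝ} (hε : 0 < ε) :
    ∀ᵐ ω ∂μ, ∀ᶠ N : ℕ in atTop, ∀ s n : ℕ, s + n ≤ N → ∀ i ∈ c,
      windowAct c (fun m => A m ω) s n 0 i ≤ ((u * n + ε * N : ℝ) : EReal) := by
  have := h.isProbabilityMeasure_seqLaw
  rw [h.gammaSCC_eq_growthRate c] at hu
  filter_upwards [ae_of_ae_map h.aemeasurable
    ((isSubadditiveCocycle_windowAct c).ae_eventually_segment_le_of_growthRate_lt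
      h.stationaryErgodic.ergodic_seqShift_one (measurable_iSup_windowAct c) h.integrable_stepCost
      (h.ae_seqLaw_windowAct_one_le c) hu hε)] with ω hω
  filter_upwards [hω] with N hN s n hsn i hi
  simpa [iterate_seqShift, windowAct_seqShift] using iSup₂_le_iff.1 (hN s n hsn) i hi

theorem ae_eventually_entry_le (h : IsIntegrableSequence μ A) {δ : ℝ} (hδ : 0 < δ) :
    ∀ᵐ ω ∂μ, ∀ᶠ N : ℕ in atTop, ∀ k ≤ N, ∀ i j, A k ω i j ≤ ((δ * N : ℝ) : EReal) := by
  have := h.isProbabilityMeasure_seqLaw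
  have hT := h.stationaryErgodic.ergodic_seqShift_one
  filter_upwards [ae_of_ae_map h.aemeasurable
      (ae_eventually_forall_le_mul hT h.integrable_stepCost hδ),
    ae_of_ae_map h.aemeasurable (ae_forall_iterate hT.toMeasurePreserving h.ae_seqLaw_ne_top)]
    with ω hω htop
  filter_upwards [hω] with N hN k hk i j
  refine le_trans ?_ (EReal.coe_le_coe_iff.2 (hN k hk))
  simpa [iterate_seqShift, seqShift] using le_stepCost (htop k) i j

end IsIntegrableSequence

end StationarySequences

/-! ### Strongly connected components -/

open Relation

/-- The strongly connected component of a node. -/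
def sccOf {ι : Type*} (r : ι → ι → Prop) (i : ι) : Set ι :=
  {j | ReflTransGen r i j ∧ ReflTransGen r j i}

section Graphs

variable {ι : Type*} {r : ι → ι → Prop} {c c' : Set ι} {i j k : ι}

theorem isSCC_sccOf (r : ι → ι → Prop) (i : ι) : IsSCC r (sccOf r i) := ⟨i, rfl⟩

theorem mem_sccOf_self (r : ι → ι → Prop) (i : ι) : i ∈ sccOf r i := ⟨.refl, .refl⟩

theorem reflTransGen_induction [Finite ι] {P : ι → Prop}
    (h : ∀ i, (∀ j, ReflTransGen r i j → ¬ ReflTransGen r j i → P j) → P i) (i : ι) : P i := by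
  let below : ι → ι → Prop := fun j i => ReflTransGen r i j ∧ ¬ ReflTransGen r j i
  have : IsTrans ι below :=
    ⟨fun i j k hij hjk => ⟨hjk.1.trans hij.1, fun hik => hij.2 (hik.trans hjk.1)⟩⟩
  have : Std.Irrefl below := ⟨fun i hi => hi.2 hi.1⟩
  exact (Finite.wellFounded_of_trans_of_irrefl below).induction i
    fun i ih => h i fun j hij hji => ih j ⟨hij, hji⟩

namespace IsSCC

theorem nonempty (hc : IsSCC r c) : c.Nonempty := by
  obtain ⟨i, rfl⟩ := hc
  exact ⟨i, mem_sccOf_self r i⟩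

theorem reflTransGen (hc : IsSCC r c) (hi : i ∈ c) (hj : j ∈ c) : ReflTransGen r i j := by
  obtain ⟨k, rfl⟩ := hc
  exact hi.2.trans hj.1

theorem mem_of_reflTransGen (hc : IsSCC r c) (hi : i ∈ c) (hij : ReflTransGen r i j)
    (hji : ReflTransGen r j i) : j ∈ c := by
  obtain ⟨k, rfl⟩ := hc
  exact ⟨hi.1.trans hij, hji.trans hi.2⟩

theorem eq_of_mem (hc : IsSCC r c) (hc' : IsSCC r c') (hi : i ∈ c) (hi' : i ∈ c') : c = c' := by
  ext j
  exact ⟨fun hj => hc'.mem_of_reflTransGen hi' (hc.reflTransGen hi hj) (hc.reflTransGen hj hi),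
    fun hj => hc.mem_of_reflTransGen hi (hc'.reflTransGen hi' hj) (hc'.reflTransGen hj hi')⟩

theorem sccReach_iff (hc : IsSCC r c) (hi : i ∈ c) : sccReach r c c' ↔ nodeReach r i c' :=
  ⟨fun ⟨_, hk, j, hj, hkj⟩ => ⟨j, hj, (hc.reflTransGen hi hk).trans hkj⟩, fun h => ⟨i, hi, h⟩⟩

theorem stronglyConnected (hc : IsSCC r c) (hi : i ∈ c) (hj : j ∈ c) (hij : r i j) :
    StronglyConnected fun x y : c => r x y := by
  have hpath : ∀ (y : c) {x : ι}, ReflTransGen r x y → ∀ hx : x ∈ c,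
      ReflTransGen (fun x y : c => r x y) ⟨x, hx⟩ y := by
    intro y x hxy
    induction hxy using ReflTransGen.head_induction_on with
    | refl => exact fun _ => .refl
    | head hxz hzy ih =>
      intro hx
      have hz := hc.mem_of_reflTransGen hx (.single hxz) (hzy.trans (hc.reflTransGen y.2 hx))
      exact .head (b := ⟨_, hz⟩) hxz (ih hz)
  intro x y
  exact .trans_right (hpath ⟨i, hi⟩ (hc.reflTransGen x.2 hi) x.2)
    (.trans_left (.single hij) (hpath y (hc.reflTransGen hj y.2) hj))

end IsSCC

end Graphs

section CycleTimes

variable {Ω ι : Type*} [MeasurableSpace Ω] {μ : Measure Ω} {A : ℤ → Ω → ι → ι → EReal}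
  {c : Set ι} {i j : ι}

theorem gammaSCC_le_cycleTime (hc : IsSCC (arcRel μ (A 0)) c)
    (hi : nodeReach (arcRel μ (A 0)) i c) : gammaSCC μ A c ≤ cycleTime μ A i :=
  le_iSup₂ (f := fun c _ => gammaSCC μ A c) c ⟨hc, hi⟩

theorem gammaSCC_le_cycleTime_of_mem (hc : IsSCC (arcRel μ (A 0)) c) (hi : i ∈ c) :
    gammaSCC μ A c ≤ cycleTime μ A i :=
  gammaSCC_le_cycleTime hc ⟨i, hi, .refl⟩

theorem cycleTime_le_of_reflTransGen (hij : ReflTransGen (arcRel μ (A 0)) i j) :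
    cycleTime μ A j ≤ cycleTime μ A i :=
  iSup₂_le fun _ ⟨hc, k, hk, hjk⟩ => gammaSCC_le_cycleTime hc ⟨k, hk, hij.trans hjk⟩

theorem exists_gammaSCC_eq_cycleTime [Finite ι] (i : ι) :
    ∃ c, (IsSCC (arcRel μ (A 0)) c ∧ nodeReach (arcRel μ (A 0)) i c) ∧
      gammaSCC μ A c = cycleTime μ A i := by
  obtain ⟨c, hc, hmax⟩ := Set.exists_max_image
    {c | IsSCC (arcRel μ (A 0)) c ∧ nodeReach (arcRel μ (A 0)) i c} (gammaSCC μ A) (Set.toFinite _)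
    ⟨_, isSCC_sccOf _ i, i, mem_sccOf_self _ i, .refl⟩
  exact ⟨c, hc, (gammaSCC_le_cycleTime hc.1 hc.2).antisymm (iSup₂_le hmax)⟩

namespace IsSCC

theorem cycleTime_eq_gammaDown (hc : IsSCC (arcRel μ (A 0)) c) (hi : i ∈ c) :
    cycleTime μ A i = gammaDown μ A c := by
  simp only [cycleTime, gammaDown, Eset, Set.mem_ofPred_eq, hc.sccReach_iff hi]

theorem mem_Hset_iff [Finite ι] (hc : IsSCC (arcRel μ (A 0)) c) (hi : i ∈ c) :
    j ∈ Hset μ A c ↔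
      ReflTransGen (arcRel μ (A 0)) i j ∧ cycleTime μ A j = cycleTime μ A i := by
  constructor
  · rintro ⟨c', hc', ⟨k, hk, hkj⟩, hjc', hγ⟩
    have hij := (hc.reflTransGen hi hk).trans hkj
    rw [← hc.cycleTime_eq_gammaDown hi] at hγ
    exact ⟨hij, (cycleTime_le_of_reflTransGen hij).antisymm (hγ ▸ gammaSCC_le_cycleTime hc' hjc')⟩
  · rintro ⟨hij, hji⟩
    obtain ⟨c', hc', hγ⟩ := exists_gammaSCC_eq_cycleTime (μ := μ) (A := A) j
    exact ⟨c', hc'.1, ⟨i, hi, hij⟩, hc'.2, hγ.trans (hji.trans (hc.cycleTime_eq_gammaDown hi))⟩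

theorem subset_Hset [Finite ι] (hc : IsSCC (arcRel μ (A 0)) c) : c ⊆ Hset μ A c :=
  fun _ hi => (hc.mem_Hset_iff hi).2 ⟨.refl, rfl⟩

theorem Hset_subset_Hset [Finite ι] {c' : Set ι} (hc : IsSCC (arcRel μ (A 0)) c)
    (hc' : IsSCC (arcRel μ (A 0)) c') (hj : j ∈ c') (hjc : j ∈ Hset μ A c) :
    Hset μ A c' ⊆ Hset μ A c := by
  obtain ⟨i, hi⟩ := hc.nonempty
  intro k hk
  rw [hc'.mem_Hset_iff hj] at hk
  rw [hc.mem_Hset_iff hi] at hjc ⊢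
  exact ⟨hjc.1.trans hk.1, hk.2.trans hjc.2⟩

theorem gammaSCC_eq_cycleTime_of_Hset_eq [Finite ι] (hc : IsSCC (arcRel μ (A 0)) c)
    (hH : Hset μ A c = c) (hi : i ∈ c) : gammaSCC μ A c = cycleTime μ A i := by
  obtain ⟨c', ⟨hc', k, hk, hik⟩, hγ⟩ := exists_gammaSCC_eq_cycleTime (μ := μ) (A := A) i
  have hkc : k ∈ c := hH ▸ (hc.mem_Hset_iff hi).2
    ⟨hik, (cycleTime_le_of_reflTransGen hik).antisymm (hγ ▸ gammaSCC_le_cycleTime_of_mem hc' hk)⟩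
  rwa [hc.eq_of_mem hc' hkc hk]

theorem dominating_of_Hset_eq [Finite ι] (hc : IsSCC (arcRel μ (A 0)) c) (hH : Hset μ A c = c) :
    Dominating μ A c := by
  obtain ⟨i, hi⟩ := hc.nonempty
  refine Set.eq_singleton_iff_unique_mem.2
    ⟨⟨⟨hc, i, hi, i, hi, .refl⟩, c, hc, ⟨i, hi, i, hi, .refl⟩,
      (hc.gammaSCC_eq_cycleTime_of_Hset_eq hH hi).trans (hc.cycleTime_eq_gammaDown hi)⟩, ?_⟩
  rintro c₁ ⟨⟨hc₁, k, hk, j, hj, hkj⟩, c₂, hc₂, h₁₂, hγ⟩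
  have hjH : j ∈ Hset μ A c := ⟨c₂, hc₂, ⟨k, hk, hkj⟩, (hc₁.sccReach_iff hj).1 h₁₂, hγ⟩
  exact hc₁.eq_of_mem hc hj (hH ▸ hjH)

end IsSCC

end CycleTimes

/-! ### The upper bound -/

section UpperBound

/-- An optimal path from `i` either stays in `c` or leaves `c` for the first time along an arc
`(i', j)`. -/
theorem windowAct_univ_le_or_exists_exit {ι : Type*} [Finite ι] (c : Set ι) (a : ℤ → ι → ι → EReal)
    (s : ℤ) (n : ℕ) {i : ι} (hi : i ∈ c) :
    windowAct Set.univ a s n 0 i ≤ windowAct c a s n 0 i ∨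
      ∃ k l : ℕ, k + 1 + l = n ∧ ∃ i' ∈ c, ∃ j ∉ c,
        windowAct Set.univ a s n 0 i ≤ windowAct c a (s + (k + 1 : ℕ)) l 0 i +
          (a (s + k) i' j + windowAct Set.univ a s k 0 j) := by
  induction n generalizing i with
  | zero => exact .inl le_rfl
  | succ n ih =>
    have : Nonempty ι := ⟨i⟩
    obtain ⟨j, hj⟩ := exists_eq_ciSup_of_finite
      (f := fun j => a (s + n) i j + windowAct Set.univ a s n 0 j)
    have hsucc : windowAct Set.univ a s (n + 1) 0 i =
        a (s + n) i j + windowAct Set.univ a s n 0 j := by simpa [windowAct] using hj.symm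
    rw [hsucc]
    by_cases hjc : j ∈ c
    · obtain hle | ⟨k, l, rfl, i', hi', j', hj', hle⟩ := ih hjc
      · exact .inl ((add_le_add_right hle _).trans (add_le_windowAct_succ hjc n))
      · refine .inr ⟨k, l + 1, rfl, i', hi', j', hj', (add_le_add_right hle _).trans ?_⟩
        rw [← add_assoc, Nat.cast_add (k + 1), ← add_assoc s]
        exact add_le_add_left (add_le_windowAct_succ hjc l) _
    · exact .inr ⟨n, 0, rfl, i, hi, j, hjc, by simp [windowAct]⟩

theorem windowAct_univ_le_of_exit {ι : Type*} [Finite ι] {c : Set ι} {a : ℤ → ι → ι → EReal}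
    {N : ℕ} {u δ : ℝ} (hδ : 0 ≤ δ) (hu : |u| ≤ δ)
    (hc : ∀ s n : ℕ, s + n ≤ N → ∀ i ∈ c, windowAct c a s n 0 i ≤ ((u * n + δ : ℝ) : EReal))
    (hentry : ∀ k ≤ N, ∀ i j, a k i j ≤ (δ : EReal))
    (hexit : ∀ i' ∈ c, ∀ j ∉ c, (∀ k : ℤ, a k i' j = ⊥) ∨ ∀ s n : ℕ, s + n ≤ N →
      windowAct Set.univ a s n 0 j ≤ ((u * n + δ : ℝ) : EReal))
    {s n : ℕ} (hsn : s + n ≤ N) {i : ι} (hi : i ∈ c) :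
    windowAct Set.univ a s n 0 i ≤ ((u * n + 4 * δ : ℝ) : EReal) := by
  obtain hle | ⟨k, l, rfl, i', hi', j, hj, hle⟩ := windowAct_univ_le_or_exists_exit c a s n hi
  · exact (hle.trans (hc s n hsn i hi)).trans (EReal.coe_le_coe_iff.2 (by linarith))
  · refine hle.trans ?_
    obtain hbot | hj := hexit i' hi' j hj
    · simp [hbot]
    · have hbound := add_le_add (hc (s + (k + 1)) l (by omega) i hi)
        (add_le_add (hentry (s + k) (by omega) i' j) (hj s k (by omega)))
      push_cast at hbound ⊢
      refine hbound.trans ?_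
      norm_cast
      push_cast
      linarith [neg_abs_le u]

variable {Ω ι : Type*} [MeasurableSpace Ω] {μ : Measure Ω} [IsProbabilityMeasure μ] [Finite ι]
  {A : ℤ → Ω → ι → ι → EReal}

theorem IsIntegrableSequence.ae_eventually_windowAct_univ_le (h : IsIntegrableSequence μ A) (i : ι)
    {u : ℝ} (hu : cycleTime μ A i < u) {ε : ℝ} (hε : 0 < ε) :
    ∀ᵐ ω ∂μ, ∀ᶠ N : ℕ in atTop, ∀ s n : ℕ, s + n ≤ N →
      windowAct Set.univ (fun m => A m ω) s n 0 i ≤ ((u * n + ε * N : ℝ) : EReal) := by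
  induction i using reflTransGen_induction (r := arcRel μ (A 0)) generalizing ε with
  | _ i ih =>
  have hc := isSCC_sccOf (arcRel μ (A 0)) i
  set c := sccOf (arcRel μ (A 0)) i
  have hi : i ∈ c := mem_sccOf_self _ i
  have hδ : 0 < ε / 4 := by positivity
  have hexit : ∀ᵐ ω ∂μ, ∀ i' ∈ c, ∀ j ∉ c, arcRel μ (A 0) i' j → ∀ᶠ N : ℕ in atTop,
      ∀ s n : ℕ, s + n ≤ N → windowAct Set.univ (fun m => A m ω) s n 0 j ≤
        ((u * n + ε / 4 * N : ℝ) : EReal) := by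
    simp only [ae_all_iff]
    intro i' hi' j hj hij
    have hreach := (hc.reflTransGen hi hi').tail hij
    exact ih j hreach (fun hji => hj (hc.mem_of_reflTransGen hi hreach hji))
      ((cycleTime_le_of_reflTransGen hreach).trans_lt hu) hδ
  have hlin : Tendsto (fun N : ℕ => ε / 4 * N) atTop atTop :=
    tendsto_natCast_atTop_atTop.const_mul_atTop hδ
  filter_upwards [h.ae_eventually_windowAct_le_of_gammaSCC_lt
      ((gammaSCC_le_cycleTime_of_mem hc hi).trans_lt hu) hδ, h.ae_eventually_entry_le hδ,
    h.ae_eq_bot_of_not_arcRel, hexit] with ω hcω hentry hbot hexit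
  have hexit' : ∀ᶠ N : ℕ in atTop, ∀ i' ∈ c, ∀ j ∉ c, arcRel μ (A 0) i' j → ∀ s n : ℕ,
      s + n ≤ N → windowAct Set.univ (fun m => A m ω) s n 0 j ≤
        ((u * n + ε / 4 * N : ℝ) : EReal) := by
    simpa only [eventually_all] using hexit
  filter_upwards [hcω, hentry, hexit', hlin.eventually_ge_atTop |u|] with N hcN hentryN hexitN huN
    s n hsn
  refine (windowAct_univ_le_of_exit (by positivity) huN hcN hentryN (fun i' hi' j hj => ?_) hsn
    hi).trans_eq (by ring_nf)
  by_cases hij : arcRel μ (A 0) i' j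
  · exact .inr (hexitN i' hi' j hj hij)
  · exact .inl fun k => hbot k i' j hij

end UpperBound

/-! ### The lower bound along past windows -/

/-- Almost surely, from every node of `I` some finite product of past matrices that runs inside `I`
ends with an arc to `J`. -/
def HasExits {Ω ι : Type*} [MeasurableSpace Ω] (μ : Measure Ω) (A : ℤ → Ω → ι → ι → EReal)
    (I J : Set ι) : Prop :=
  ∀ᵐ ω ∂μ, ∀ i : I, ∃ n : ℕ, pastAct (fun m => subMat I I (A m ω)) n
    (mpVec (subMat I J (A (-(n : ℤ) - 1) ω)) (fun _ => 0)) i ≠ ⊥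

section BackwardLowerBound

theorem add_le_windowAct_of_exit {ι : Type*} {c J H : Set ι} (hcH : c ⊆ H) (hJH : J ⊆ H)
    {a : ℤ → ι → ι → EReal} {n m : ℕ} {r : ℝ}
    (hJ : ∀ j ∈ J, r ≤ windowAct H a (-n - 1 - m) m 0 j) {i : ι} (hi : i ∈ c) :
    windowAct c a (-n) n (windowAct J a (-n - 1) 1 0) i + r ≤
      windowAct H a (-(m + (n + 1) : ℕ)) (m + (n + 1)) 0 i := by
  have hexit : ∀ i', windowAct J a (-n - 1) 1 0 i' + r ≤
      windowAct H a (-n - 1) 1 (windowAct H a (-n - 1 - m) m 0) i' := fun i' => by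
    rw [← windowAct_add_coe]
    exact iSup₂_le fun j hj => (add_le_add_right (by simpa [windowAct] using hJ j hj) _).trans
      (add_le_windowAct_succ (hJH hj) 0)
  rw [← windowAct_add_coe, add_comm n 1, windowAct_add, windowAct_add]
  convert windowAct_mono hcH (fun i' _ => hexit i') n hi using 2 <;> (push_cast; ring_nf)

variable {Ω ι : Type*} [MeasurableSpace Ω] {μ : Measure Ω} [Finite ι] {A : ℤ → Ω → ι → ι → EReal}

theorem IsSCC.ae_eventually_le_windowAct_of_Hset_eq {c : Set ι} (hc : IsSCC (arcRel μ (A 0)) c)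
    (hH : Hset μ A c = c)
    (hdom : Dominating μ A c → ∀ᵐ ω ∂μ, ∀ i : c,
      Tendsto (fun n => mpScale n (yVec (fun m => subMat c c (A m ω)) n i))
        atTop (𝓝 (gammaSCC μ A c))) {i : ι} (hi : i ∈ c) {u : ℝ} (hu : u < cycleTime μ A i) :
    ∀ᵐ ω ∂μ, ∀ᶠ m : ℕ in atTop,
      ((u * m : ℝ) : EReal) ≤ windowAct (Hset μ A c) (fun n => A n ω) (-m) m 0 i := by
  rw [← hc.gammaSCC_eq_cycleTime_of_Hset_eq hH hi] at hu
  filter_upwards [hdom (hc.dominating_of_Hset_eq hH)] with ω hω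
  filter_upwards [eventually_le_of_tendsto_mpScale (hω ⟨i, hi⟩) hu] with m hm
  rw [hH]
  exact hm.trans_eq (pastAct_subMat c (fun n => A n ω) m 0 ⟨i, hi⟩)

theorem IsIntegrableSequence.ae_forall_eventually_le_windowAct (h : IsIntegrableSequence μ A)
    {H : Set ι} {u : ℝ} {j : ι}
    (hj : ∀ᵐ ω ∂μ, ∀ᶠ m : ℕ in atTop,
      ((u * m : ℝ) : EReal) ≤ windowAct H (fun n => A n ω) (-m) m 0 j) :
    ∀ᵐ ω ∂μ, ∀ k : ℤ, ∀ᶠ m : ℕ in atTop,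
      ((u * m : ℝ) : EReal) ≤ windowAct H (fun n => A n ω) (k - m) m 0 j := by
  have hmeas : MeasurableSet {a : ℤ → ι → ι → EReal | ∀ᶠ m : ℕ in atTop,
      ((u * m : ℝ) : EReal) ≤ windowAct H a (-m) m 0 j} := by
    simp only [eventually_atTop, Set.ofPred_exists, Set.ofPred_forall]
    exact .iUnion fun M => .iInter fun m => .iInter fun _ =>
      measurableSet_le measurable_const (measurable_windowAct H (-m) m 0 j)
  filter_upwards [h.ae_translates hmeas hj] with ω hω k
  simpa [windowAct_seqShift, neg_add_eq_sub] using hω k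

/-- A loss that is constant in time, here that of the path up to its exit from `c`, does not change
the rate. -/
theorem eventually_le_windowAct_of_exit {c J H : Set ι} (hcH : c ⊆ H) (hJH : J ⊆ H)
    {a : ℤ → ι → ι → EReal} {u u' : ℝ} (hu : u < u')
    (hJ : ∀ j ∈ J, ∀ k : ℤ, ∀ᶠ m : ℕ in atTop,
      ((u' * m : ℝ) : EReal) ≤ windowAct H a (k - m) m 0 j) {i : ι} (hi : i ∈ c) {n : ℕ}
    (hn : windowAct c a (-n) n (windowAct J a (-n - 1) 1 0) i ≠ ⊥) :
    ∀ᶠ m : ℕ in atTop, ((u * m : ℝ) : EReal) ≤ windowAct H a (-m) m 0 i := by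
  obtain ⟨r, -, hr⟩ := EReal.lt_iff_exists_real_btwn.1 (bot_lt_iff_ne_bot.2 hn)
  have hlin : Tendsto (fun m : ℕ => (u' - u) * m) atTop atTop :=
    tendsto_natCast_atTop_atTop.const_mul_atTop (sub_pos.2 hu)
  rw [← map_add_atTop_eq_nat (n + 1), eventually_map]
  filter_upwards [(eventually_all_finite J.toFinite).2 fun j hj => hJ j hj (-n - 1),
    hlin.eventually_ge_atTop (u * (n + 1) - r)] with m hm hrm
  refine le_trans ?_ (add_le_windowAct_of_exit hcH hJH hm hi)
  refine le_trans (EReal.coe_le_coe_iff.2 ?_)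
    ((EReal.coe_add r (u' * m)).trans_le (add_le_add_left hr.le _))
  push_cast
  linarith

theorem IsIntegrableSequence.ae_eventually_le_windowAct_Hset (h : IsIntegrableSequence μ A)
    (h2 : ∀ c : Set ι, IsSCC (arcRel μ (A 0)) c → Dominating μ A c →
      ∀ᵐ ω ∂μ, ∀ i : c,
        Tendsto (fun n => mpScale n (yVec (fun m => subMat c c (A m ω)) n i))
          atTop (𝓝 (gammaSCC μ A c)))
    (h3 : ∀ c : Set ι, IsSCC (arcRel μ (A 0)) c → Hset μ A c ≠ c →
      HasExits μ A c (Hset μ A c \ c))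
    {c : Set ι} (hc : IsSCC (arcRel μ (A 0)) c) {i : ι} (hi : i ∈ c) {u : ℝ}
    (hu : u < cycleTime μ A i) :
    ∀ᵐ ω ∂μ, ∀ᶠ m : ℕ in atTop,
      ((u * m : ℝ) : EReal) ≤ windowAct (Hset μ A c) (fun n => A n ω) (-m) m 0 i := by
  induction i using reflTransGen_induction (r := arcRel μ (A 0)) generalizing c u with
  | _ i ih =>
  by_cases hH : Hset μ A c = c
  · exact hc.ae_eventually_le_windowAct_of_Hset_eq hH (h2 c hc) hi hu
  obtain ⟨u', huu', hu'⟩ := EReal.lt_iff_exists_real_btwn.1 hu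
  have hpast : ∀ᵐ ω ∂μ, ∀ j ∈ Hset μ A c \ c, ∀ k : ℤ, ∀ᶠ m : ℕ in atTop,
      ((u' * m : ℝ) : EReal) ≤ windowAct (Hset μ A c) (fun n => A n ω) (k - m) m 0 j := by
    simp only [ae_all_iff (ι := ι), ae_all_iff (ι := _ ∈ _)]
    intro j hj
    obtain ⟨hij, hji⟩ := (hc.mem_Hset_iff hi).1 hj.1
    have hcj := isSCC_sccOf (arcRel μ (A 0)) j
    have hjj := mem_sccOf_self (arcRel μ (A 0)) j
    refine h.ae_forall_eventually_le_windowAct ?_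
    filter_upwards [ih j hij (fun h' => hj.2 (hc.mem_of_reflTransGen hi hij h')) hcj hjj
      (hu'.trans_eq hji.symm)] with ω hω
    filter_upwards [hω] with m hm
    exact hm.trans (windowAct_mono (hc.Hset_subset_Hset hcj hjj hj.1) (fun _ _ => le_rfl) m
      (hcj.subset_Hset hjj))
  filter_upwards [hpast, h3 c hc hH] with ω hpast hexit
  obtain ⟨n, hn⟩ := hexit ⟨i, hi⟩
  refine eventually_le_windowAct_of_exit hc.subset_Hset Set.sdiff_subset
    (EReal.coe_lt_coe_iff.1 huu') hpast hi (n := n) ?_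
  have hvec : mpVec (subMat c (Hset μ A c \ c) (A (-(n : ℤ) - 1) ω)) (fun _ => 0) =
      fun i' : c => windowAct (Hset μ A c \ c) (fun m => A m ω) (-n - 1) 1 0 i' := by
    funext i'
    simpa [windowAct] using mpVec_subMat c (Hset μ A c \ c) (A (-(n : ℤ) - 1) ω) 0 i'
  rwa [hvec, pastAct_subMat c (fun m => A m ω)] at hn

end BackwardLowerBound

/-! ### The lower bound along forward windows -/

/-- The submatrix of `M` on `H` almost surely has a finite entry on each row, and its product with
the zero vector is integrable. -/
def HasIntegrableRows {Ω ι : Type*} [MeasurableSpace Ω] (μ : Measure Ω) (M : Ω → ι → ι → EReal)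
    (H : Set ι) : Prop :=
  (∀ᵐ ω ∂μ, ∀ i ∈ H, ∃ j ∈ H, M ω i j ≠ ⊥) ∧
    ∀ i : H, Integrable (fun ω => (mpVec (subMat H H (M ω)) (fun _ => 0) i).toReal) μ

section ForwardLowerBound

variable {ι : Type*} [Finite ι]

/-- The sum of the absolute row maxima in `H` of the matrix at time `0`; it bounds the loss that one
step inside `H` can cause. -/
def rowCost (H : Set ι) (a : ℤ → ι → ι → EReal) : ℝ :=
  ∑ i ∈ H.toFinite.toFinset, |(windowAct H a 0 1 0 i).toReal|

theorem neg_windowAct_one_le_rowCost {H : Set ι} {a : ℤ → ι → ι → EReal} {i : ι} (hi : i ∈ H)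
    (ha : ∃ j ∈ H, a 0 i j ≠ ⊥) : -windowAct H a 0 1 0 i ≤ rowCost H a := by
  obtain ⟨j, hj, hij⟩ := ha
  have hbot : windowAct H a 0 1 0 i ≠ ⊥ := by
    refine ne_bot_of_le_ne_bot hij ?_
    simpa [windowAct] using add_le_windowAct_succ (a := a) (s := 0) (v := 0) (i := i) hj 0
  have hsingle : |(windowAct H a 0 1 0 i).toReal| ≤ rowCost H a :=
    Finset.single_le_sum (f := fun i => |(windowAct H a 0 1 0 i).toReal|)
      (fun _ _ => abs_nonneg _) (H.toFinite.mem_toFinset.2 hi)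
  refine (EReal.neg_le_neg_iff.2 (EReal.coe_toReal_le hbot)).trans ?_
  exact_mod_cast (neg_le_abs _).trans hsingle

variable {Ω : Type*} [MeasurableSpace Ω] {μ : Measure Ω} {A : ℤ → Ω → ι → ι → EReal} {H : Set ι}

namespace IsIntegrableSequence

theorem integrable_rowCost (h : IsIntegrableSequence μ A) (hH : HasIntegrableRows μ (A 0) H) :
    Integrable (rowCost H) (seqLaw μ A) := by
  refine integrable_finsetSum _ fun i hi => Integrable.abs ?_
  refine (integrable_map_measure (measurable_windowAct H 0 1 0 i).ereal_toReal.aestronglyMeasurable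
    h.aemeasurable).2 ((hH.2 ⟨i, H.toFinite.mem_toFinset.1 hi⟩).congr (.of_forall fun ω => ?_))
  exact congrArg EReal.toReal
    ((mpVec_subMat H H (A 0 ω) 0 _).trans (by simp [windowAct]))

theorem ae_seqLaw_iSup_neg_windowAct_one_le (h : IsIntegrableSequence μ A)
    (hH : HasIntegrableRows μ (A 0) H) :
    ∀ᵐ a ∂seqLaw μ A,
      ⨆ i ∈ H, -windowAct H a (-(1 : ℕ)) 1 0 i ≤ rowCost H (seqShift (-1) a) := by
  filter_upwards [(h.stationaryErgodic.measurePreserving_seqShift (-1)).quasiMeasurePreserving.ae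
    ((ae_map_iff h.aemeasurable (measurableSet_forall_exists_ne_bot H H)).2 hH.1)] with a ha
  refine iSup₂_le fun i hi => ?_
  simpa [windowAct_seqShift] using neg_windowAct_one_le_rowCost hi (ha i hi)

variable [IsProbabilityMeasure μ]

theorem ae_eventually_le_xVec (h : IsIntegrableSequence μ A) (hH : HasIntegrableRows μ (A 0) H)
    {u : ℝ} (hgood : ∀ᵐ ω ∂μ, ∃ m : ℕ, 1 ≤ m ∧ ∀ i ∈ H,
      ((u * m : ℝ) : EReal) ≤ windowAct H (fun n => A n ω) (-m) m 0 i) {ε : ℝ} (hε : 0 < ε) :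
    ∀ᵐ ω ∂μ, ∀ᶠ N : ℕ in atTop, ∀ i ∈ H,
      (((u - ε) * N : ℝ) : EReal) ≤ xVec (fun n => A n ω) N i := by
  have := h.isProbabilityMeasure_seqLaw
  have hgood' : ∀ᵐ a ∂seqLaw μ A, ∃ m : ℕ, 1 ≤ m ∧
      ⨆ i ∈ H, -windowAct H a (-m) m 0 i ≤ ((-u * m : ℝ) : EReal) := by
    refine (ae_map_iff h.aemeasurable ?_).2 ?_
    · simp only [Set.ofPred_exists, Set.ofPred_and]
      exact .iUnion fun m => (MeasurableSet.const _).inter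
        (measurableSet_le (measurable_iSup_neg_windowAct H m) measurable_const)
    · simpa [EReal.neg_le] using hgood
  filter_upwards [ae_of_ae_map h.aemeasurable
    ((isSubadditiveCocycle_neg_windowAct H).ae_eventually_le_of_leftInverse
      h.stationaryErgodic.ergodic_seqShift_one (leftInverse_seqShift_neg 1)
      (measurable_iSup_neg_windowAct H)
      ((h.stationaryErgodic.measurePreserving_seqShift (-1)).integrable_comp_of_integrable
        (h.integrable_rowCost hH))
      (h.ae_seqLaw_iSup_neg_windowAct_one_le hH) hgood' hε)] with ω hω
  filter_upwards [hω] with N hN i hi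
  have hi' := iSup₂_le_iff.1 hN i hi
  rw [iterate_seqShift, windowAct_seqShift, mul_one, neg_add_cancel, EReal.neg_le,
    ← EReal.coe_neg] at hi'
  rw [xVec_eq_windowAct]
  refine le_trans (EReal.coe_le_coe_iff.2 (le_of_eq ?_))
    (hi'.trans (windowAct_mono H.subset_univ (fun _ _ => le_rfl) N hi))
  ring

theorem exists_ae_eventually_le_windowAct (h : IsIntegrableSequence μ A)
    (hH : HasIntegrableRows μ (A 0) H) :
    ∃ u : ℝ, ∀ᵐ ω ∂μ, ∀ᶠ m : ℕ in atTop, ∀ i ∈ H,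
      ((u * m : ℝ) : EReal) ≤ windowAct H (fun n => A n ω) (-m) m 0 i := by
  have := h.isProbabilityMeasure_seqLaw
  obtain ⟨u, hu⟩ := exists_gt (∫ a, rowCost H (seqShift (-1) a) ∂seqLaw μ A)
  have hlin := (isSubadditiveCocycle_neg_windowAct H).ae_eventually_le_of_integral_lt
    h.stationaryErgodic.ergodic_seqShift_neg_one
    ((h.stationaryErgodic.measurePreserving_seqShift (-1)).integrable_comp_of_integrable
      (h.integrable_rowCost hH))
    (h.ae_seqLaw_iSup_neg_windowAct_one_le hH) hu
  refine ⟨-u, ?_⟩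
  filter_upwards [ae_of_ae_map h.aemeasurable hlin] with ω hω
  simpa [EReal.neg_le] using hω

end IsIntegrableSequence

end ForwardLowerBound

/-! ### Exits from the components that are not dominating -/

section Exits

variable {Ω ι : Type*} [MeasurableSpace Ω] {μ : Measure Ω} {A : ℤ → Ω → ι → ι → EReal}

theorem hasExits_iff_measure_eq_zero {I J : Set ι} :
    HasExits μ A I J ↔ μ {ω | ∃ i : I, ∀ n : ℕ, pastAct (fun m => subMat I I (A m ω)) n
      (mpVec (subMat I J (A (-(n : ℤ) - 1) ω)) (fun _ => 0)) i = ⊥} = 0 := by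
  simp only [HasExits, ae_iff, not_forall, not_exists, not_not]

variable [Finite ι] {c : Set ι}

theorem IsSCC.exists_arcRel_Hset_sdiff (hc : IsSCC (arcRel μ (A 0)) c) (hH : Hset μ A c ≠ c) :
    ∃ i ∈ c, ∃ j ∈ Hset μ A c \ c, arcRel μ (A 0) i j := by
  obtain ⟨j, hjH, hjc⟩ := Set.exists_of_ssubset (hc.subset_Hset.ssubset_of_ne hH.symm)
  obtain ⟨i, hi⟩ := hc.nonempty
  have hij := ((hc.mem_Hset_iff hi).1 hjH).1
  induction hij using ReflTransGen.head_induction_on with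
  | refl => exact absurd hi hjc
  | @head i k hik hkj ih =>
    by_cases hk : k ∈ c
    · exact ih hk
    · have hkH : k ∈ Hset μ A c := (hc.mem_Hset_iff hi).2 ⟨.single hik,
        (cycleTime_le_of_reflTransGen (.single hik)).antisymm
          (((hc.mem_Hset_iff hi).1 hjH).2.ge.trans (cycleTime_le_of_reflTransGen hkj))⟩
      exact ⟨i, hi, k, ⟨hkH, hk⟩, hik⟩

namespace IsIntegrableSequence

theorem hasExits_of_forall_not_arcRel (h : IsIntegrableSequence μ A) {H : Set ι}
    (hrows : ∀ᵐ ω ∂μ, ∀ i ∈ c, ∃ j ∈ H, A 0 ω i j ≠ ⊥)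
    (hc : ∀ i ∈ c, ∀ j ∈ c, ¬ arcRel μ (A 0) i j) : HasExits μ A c (H \ c) := by
  filter_upwards [h.ae_translates (measurableSet_forall_exists_ne_bot c H) hrows,
    h.ae_eq_bot_of_not_arcRel] with ω hω hbot i
  obtain ⟨j, hj, hij⟩ := hω (-1) i i.2
  have hjc : j ∉ c := fun hjc => hij (hbot _ i j (hc i i.2 j hjc))
  refine ⟨0, ne_bot_of_le_ne_bot hij (le_iSup_of_le ⟨j, hj, hjc⟩ ?_)⟩
  simp [subMat, seqShift]

theorem hasExits_Hset_sdiff (h : IsIntegrableSequence μ A) (hc : IsSCC (arcRel μ (A 0)) c)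
    (hH : Hset μ A c ≠ c)
    (hrows : ∀ᵐ ω ∂μ, ∀ i ∈ Hset μ A c, ∃ j ∈ Hset μ A c, A 0 ω i j ≠ ⊥)
    (h3 : ∀ I J : Set ι, Disjoint I J →
      (∀ᵐ ω ∂μ, ∀ i ∈ I ∪ J, ∃ j ∈ I ∪ J, A 0 ω i j ≠ ⊥) →
      (∀ᵐ ω ∂μ, ∀ i ∈ J, ∀ j ∈ I, A 0 ω i j = ⊥) →
      StronglyConnected (arcRel μ (fun ω => subMat I I (A 0 ω))) →
      ¬ (∀ᵐ ω ∂μ, ∀ i ∈ I, ∀ j ∈ J, A 0 ω i j = ⊥) → HasExits μ A I J) :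
    HasExits μ A c (Hset μ A c \ c) := by
  by_cases harc : ∀ i ∈ c, ∀ j ∈ c, ¬ arcRel μ (A 0) i j
  · exact h.hasExits_of_forall_not_arcRel
      (hrows.mono fun ω hω i hi => hω i (hc.subset_Hset hi)) harc
  push Not at harc
  obtain ⟨i, hi, j, hj, hij⟩ := harc
  refine h3 c (Hset μ A c \ c) Set.disjoint_sdiff_right
    (by rwa [Set.union_sdiff_cancel hc.subset_Hset]) ?_ (hc.stronglyConnected hi hj hij) ?_
  · filter_upwards [h.ae_eq_bot_of_not_arcRel] with ω hω k hk l hl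
    exact hω 0 k l fun hkl => hk.2 (hc.mem_of_reflTransGen hl ((hc.mem_Hset_iff hl).1 hk.1).1
      (.single hkl))
  · intro hbot
    obtain ⟨k, hk, l, hl, hkl⟩ := hc.exists_arcRel_Hset_sdiff hH
    exact hkl.ne' (ae_iff.1 (hbot.mono fun ω hω => hω k hk l hl))

end IsIntegrableSequence

end Exits

/-! ### The limit of `x(n,0)/n` -/

section CycleTimeLimit

variable {Ω ι : Type*} [MeasurableSpace Ω] {μ : Measure Ω} {A : ℤ → Ω → ι → ι → EReal} [Finite ι]

namespace IsIntegrableSequence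

variable [IsProbabilityMeasure μ]

theorem ae_eventually_xVec_le (h : IsIntegrableSequence μ A) {i : ι} {u : ℝ}
    (hu : cycleTime μ A i < u) :
    ∀ᵐ ω ∂μ, ∀ᶠ N : ℕ in atTop, xVec (fun n => A n ω) N i ≤ ((u * N : ℝ) : EReal) := by
  obtain ⟨v, hv, hvu⟩ := EReal.lt_iff_exists_real_btwn.1 hu
  filter_upwards [h.ae_eventually_windowAct_univ_le i hv
    (sub_pos.2 (EReal.coe_lt_coe_iff.1 hvu))] with ω hω
  filter_upwards [hω] with N hN
  rw [xVec_eq_windowAct]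
  refine (hN 0 N (zero_add N).le).trans (EReal.coe_le_coe_iff.2 (le_of_eq ?_))
  ring

theorem ae_eventually_le_xVec_of_lt_cycleTime (h : IsIntegrableSequence μ A)
    (h1 : ∀ c : Set ι, IsSCC (arcRel μ (A 0)) c → HasIntegrableRows μ (A 0) (Hset μ A c))
    (h2 : ∀ c : Set ι, IsSCC (arcRel μ (A 0)) c → Dominating μ A c →
      ∀ᵐ ω ∂μ, ∀ i : c,
        Tendsto (fun n => mpScale n (yVec (fun m => subMat c c (A m ω)) n i))
          atTop (𝓝 (gammaSCC μ A c)))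
    (h3 : ∀ c : Set ι, IsSCC (arcRel μ (A 0)) c → Hset μ A c ≠ c →
      HasExits μ A c (Hset μ A c \ c)) {i : ι} {u : ℝ} (hu : u < cycleTime μ A i) :
    ∀ᵐ ω ∂μ, ∀ᶠ N : ℕ in atTop, ((u * N : ℝ) : EReal) ≤ xVec (fun n => A n ω) N i := by
  have hc := isSCC_sccOf (arcRel μ (A 0)) i
  have hi := mem_sccOf_self (arcRel μ (A 0)) i
  set c := sccOf (arcRel μ (A 0)) i
  obtain ⟨v, huv, hv⟩ := EReal.lt_iff_exists_real_btwn.1 hu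
  have hpast : ∀ᵐ ω ∂μ, ∀ j ∈ Hset μ A c, ∀ᶠ m : ℕ in atTop,
      ((v * m : ℝ) : EReal) ≤ windowAct (Hset μ A c) (fun n => A n ω) (-m) m 0 j := by
    simp only [ae_all_iff]
    intro j hj
    have hcj := isSCC_sccOf (arcRel μ (A 0)) j
    have hjj := mem_sccOf_self (arcRel μ (A 0)) j
    filter_upwards [h.ae_eventually_le_windowAct_Hset h2 h3 hcj hjj
      (hv.trans_eq ((hc.mem_Hset_iff hi).1 hj).2.symm)] with ω hω
    filter_upwards [hω] with m hm
    exact hm.trans (windowAct_mono (hc.Hset_subset_Hset hcj hjj hj) (fun _ _ => le_rfl) m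
      (hcj.subset_Hset hjj))
  have hgood : ∀ᵐ ω ∂μ, ∃ m : ℕ, 1 ≤ m ∧ ∀ j ∈ Hset μ A c,
      ((v * m : ℝ) : EReal) ≤ windowAct (Hset μ A c) (fun n => A n ω) (-m) m 0 j := by
    filter_upwards [hpast] with ω hω
    exact ((eventually_ge_atTop 1).and
      ((eventually_all_finite (Set.toFinite _)).2 hω)).exists
  filter_upwards [h.ae_eventually_le_xVec (h1 c hc) hgood
    (sub_pos.2 (EReal.coe_lt_coe_iff.1 huv))] with ω hω
  filter_upwards [hω] with N hN
  simpa only [sub_sub_cancel] using hN i (hc.subset_Hset hi)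

theorem le_cycleTime (h : IsIntegrableSequence μ A) {i : ι} {u : ℝ}
    (hu : ∀ᵐ ω ∂μ, ∀ᶠ N : ℕ in atTop, ((u * N : ℝ) : EReal) ≤ xVec (fun n => A n ω) N i) :
    u ≤ cycleTime μ A i := by
  by_contra! hlt
  obtain ⟨v, hv, hvu⟩ := EReal.lt_iff_exists_real_btwn.1 hlt
  obtain ⟨ω, hω, hω'⟩ := (hu.and (h.ae_eventually_xVec_le hv)).exists
  obtain ⟨N, ⟨hN, hN'⟩, hpos⟩ := ((hω.and hω').and (eventually_gt_atTop 0)).exists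
  exact (EReal.coe_le_coe_iff.1 (hN.trans hN')).not_gt
    (mul_lt_mul_of_pos_right (EReal.coe_lt_coe_iff.1 hvu) (Nat.cast_pos.2 hpos))

theorem cycleTime_ne_bot (h : IsIntegrableSequence μ A) {H : Set ι}
    (hH : HasIntegrableRows μ (A 0) H) {i : ι} (hi : i ∈ H) : cycleTime μ A i ≠ ⊥ := by
  obtain ⟨u, hu⟩ := h.exists_ae_eventually_le_windowAct hH
  have hgood := hu.mono fun ω hω => ((eventually_ge_atTop 1).and hω).exists
  refine ne_bot_of_le_ne_bot (EReal.coe_ne_bot (u - 1)) (h.le_cycleTime ?_)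
  filter_upwards [h.ae_eventually_le_xVec hH hgood one_pos] with ω hω
  exact hω.mono fun N hN => hN i hi

theorem cycleTime_ne_top (h : IsIntegrableSequence μ A) (i : ι) : cycleTime μ A i ≠ ⊤ := by
  obtain ⟨c, -, hc⟩ := exists_gammaSCC_eq_cycleTime (μ := μ) (A := A) i
  exact hc ▸ h.gammaSCC_ne_top c

end IsIntegrableSequence

theorem sufficient_condition_left_products_general [IsProbabilityMeasure μ]
    (h : IsIntegrableSequence μ A)
    (h1 : ∀ c : Set ι, IsSCC (arcRel μ (A 0)) c → HasIntegrableRows μ (A 0) (Hset μ A c))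
    (h2 : ∀ c : Set ι, IsSCC (arcRel μ (A 0)) c → Dominating μ A c →
      ∀ᵐ ω ∂μ, ∀ i : c,
        Tendsto (fun n => mpScale n (yVec (fun m => subMat c c (A m ω)) n i))
          atTop (𝓝 (gammaSCC μ A c)))
    (h3 : ∀ c : Set ι, IsSCC (arcRel μ (A 0)) c → Hset μ A c ≠ c →
      HasExits μ A c (Hset μ A c \ c)) :
    ∃ L : ι → ℝ,
      (∀ i, (L i : EReal) = cycleTime μ A i) ∧
      ∀ᵐ ω ∂μ, ∀ i,
        Tendsto (fun n => mpScale n (xVec (fun m => A m ω) n i)) atTop (𝓝 (L i : EReal)) := by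
  have hL : ∀ i, ((cycleTime μ A i).toReal : EReal) = cycleTime μ A i := fun i =>
    have hc := isSCC_sccOf (arcRel μ (A 0)) i
    EReal.coe_toReal (h.cycleTime_ne_top i)
      (h.cycleTime_ne_bot (h1 _ hc) (hc.subset_Hset (mem_sccOf_self _ i)))
  refine ⟨fun i => (cycleTime μ A i).toReal, hL, ae_all_iff.2 fun i => ?_⟩
  rw [hL i]
  exact ae_tendsto_mpScale (fun _ hv => h.ae_eventually_le_xVec_of_lt_cycleTime h1 h2 h3 hv)
    fun _ hu => h.ae_eventually_xVec_le hu

end CycleTimeLimit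

end

theorem sufficient_condition_left_products
    {d : ℕ} {Ω : Type*} [MeasurableSpace Ω] (μ : Measure Ω) [IsProbabilityMeasure μ]
    (A : ℤ → Ω → Fin d → Fin d → EReal)
    (hmeas : ∀ n, Measurable (A n))
    (hnotop : ∀ n ω i j, A n ω i j ≠ ⊤)
    (herg : StationaryErgodic μ A)
    (hint : Integrable (fun ω => (max (⨆ i, ⨆ j, A 0 ω i j) 0).toReal) μ)
    -- Hypothesis 1: `A^{{c}}(0)` has a finite entry on each row and `A^{{c}}(0) ⊗ 0` is integrable
    (h1 : ∀ c : Set (Fin d), IsSCC (arcRel μ (A 0)) c →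
      (∀ᵐ ω ∂μ, ∀ i ∈ Hset μ A c, ∃ j ∈ Hset μ A c, A 0 ω i j ≠ ⊥) ∧
      ∀ i : Hset μ A c,
        Integrable (fun ω =>
          (mpVec (subMat (Hset μ A c) (Hset μ A c) (A 0 ω)) (fun _ => 0) i).toReal) μ)
    -- Hypothesis 2
    (h2 : ∀ c : Set (Fin d), IsSCC (arcRel μ (A 0)) c → Dominating μ A c →
      ∀ᵐ ω ∂μ, ∀ i : c,
        Tendsto (fun n => mpScale n (yVec (fun m => subMat c c (A m ω)) n i))
          atTop (𝓝 (gammaSCC μ A c)))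
    -- Hypothesis 3
    (h3 : ∀ I J : Set (Fin d), Disjoint I J →
      (∀ᵐ ω ∂μ, ∀ i ∈ I ∪ J, ∃ j ∈ I ∪ J, A 0 ω i j ≠ ⊥) →
      (∀ᵐ ω ∂μ, ∀ i ∈ J, ∀ j ∈ I, A 0 ω i j = ⊥) →
      StronglyConnected (arcRel μ (fun ω => subMat I I (A 0 ω))) →
      ¬ (∀ᵐ ω ∂μ, ∀ i ∈ I, ∀ j ∈ J, A 0 ω i j = ⊥) →
      μ {ω | ∃ i : I, ∀ n : ℕ,
        pastAct (fun m => subMat I I (A m ω)) n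
          (mpVec (subMat I J (A (-(n : ℤ) - 1) ω)) (fun _ => 0)) i = ⊥} = 0) :
    ∃ L : Fin d → ℝ,
      (∀ i, (L i : EReal) = cycleTime μ A i) ∧
      ∀ᵐ ω ∂μ, ∀ i,
        Tendsto (fun n => mpScale n (xVec (fun m => A m ω) n i)) atTop (𝓝 (L i : EReal)) := by
  have h : IsIntegrableSequence μ A := ⟨hmeas, hnotop, herg, hint⟩
  refine sufficient_condition_left_products_general h h1 h2 fun c hc hH => ?_
  exact h.hasExits_Hset_sdiff hc hH (h1 c hc).1 fun I J hIJ hrows hJI hI hD =>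
    hasExits_iff_measure_eq_zero.2 (h3 I J hIJ hrows hJI hI hD)
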